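/- arXiv:1801.02111 — 6 statements merged into one kernel-verified Lean document; each statement's English description precedes it below -/
import Mathlib

section
/- Let R : [0,∞)×[0,∞) → ℝ satisfy condition (H1) and let (μ_t)_{t≥0} be a weakly continuous family of Borel probability measures on ℝ solving the measure-flow equation for R. Then for every z ∈ ℂ with Im z > 0 and every t ≥ 0, the Cauchy transform G_t(z) := ∫_ℝ (x − z)^{-1} μ_t(dx) satisfies G_t(z) = G_0(z) + ∫_0^t (d/ds)R(s,s) · G_s(z) · H_s(z) ds, where H_s(z) := ∫_ℝ (x − z)^{-2} μ_s(dx). -/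
open MeasureTheory

/-- Condition (H1): for every `T > 0`, `s ↦ R(s,s)` is `C¹` on `(0,∞)`, continuous at `0`, its
derivative has finitely many zeros in `(0,T]`, and there is `α > 1` such that for all
`t ∈ [0,T]` the map `s ↦ R(s,t)` is absolutely continuous on `[0,T]` (expressed via the
fundamental theorem of calculus with an integrable integrand `∂R/∂s`) with
`sup_{0≤t≤T} ∫_0^T |∂R/∂s(s,t)|^α ds < ∞`. -/
def CondH1 (R : ℝ → ℝ → ℝ) : Prop :=
  ContDiffOn ℝ 1 (fun s => R s s) (Set.Ioi 0) ∧
  ContinuousWithinAt (fun s => R s s) (Set.Ici 0) 0 ∧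
  (∀ T > (0 : ℝ), {s ∈ Set.Ioc (0 : ℝ) T | deriv (fun u => R u u) s = 0}.Finite) ∧
  (∀ T > (0 : ℝ), ∃ α > (1 : ℝ), ∃ dR : ℝ → ℝ → ℝ, ∃ C : ℝ,
    ∀ t ∈ Set.Icc (0 : ℝ) T,
      IntervalIntegrable (fun s => dR s t) volume 0 T ∧
      (∀ s ∈ Set.Icc (0 : ℝ) T, R s t = R 0 t + ∫ u in (0 : ℝ)..s, dR u t) ∧
      ∫⁻ s in Set.Ioc (0 : ℝ) T, ENNReal.ofReal (|dR s t| ^ α) ≤ ENNReal.ofReal C)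

/-- `f ∈ C_b³(ℝ)`: three times continuously differentiable with `f` and its first three
derivatives bounded. -/
def IsCb3 (f : ℝ → ℝ) : Prop :=
  ContDiff ℝ 3 f ∧ ∀ k : ℕ, k ≤ 3 → ∃ C : ℝ, ∀ x : ℝ, |iteratedDeriv k f x| ≤ C

/-- The difference quotient `(f′(x) − f′(y))/(x − y)`, interpreted as `f″(x)` on the diagonal. -/
noncomputable def diffQuot (f : ℝ → ℝ) (x y : ℝ) : ℝ :=
  if x = y then deriv (deriv f) x else (deriv f x - deriv f y) / (x - y)

/-- The measure-flow equation for `R`: for every `t ≥ 0` and every `f ∈ C_b³(ℝ)`,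
`∫ f dμ_t = ∫ f dμ_0 + (1/2)∫_0^t (d/ds)R(s,s) ∫∫ (f′(x)−f′(y))/(x−y) dμ_s dμ_s ds`. -/
def SolvesFlow (R : ℝ → ℝ → ℝ) (μ : ℝ → ProbabilityMeasure ℝ) : Prop :=
  ∀ t ≥ (0 : ℝ), ∀ f : ℝ → ℝ, IsCb3 f →
    ∫ x, f x ∂(μ t : Measure ℝ)
      = (∫ x, f x ∂(μ 0 : Measure ℝ))
        + (1 / 2) * ∫ s in (0 : ℝ)..t,
            deriv (fun u => R u u) s *
              ∫ x, ∫ y, diffQuot f x y ∂(μ s : Measure ℝ) ∂(μ s : Measure ℝ)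

/-!
For non-real `z` the Cauchy kernel `k x = (x - z)⁻¹` is bounded together with all its derivatives,
so its real and imaginary parts are admissible test functions in the measure-flow equation. As
`k' = -k²` and, by the resolvent identity, `k x - k y = (y - x) k x k y`, the difference quotient
of `k'` is `k x (k y)² + (k x)² k y`. Its double integral against `μ_s ⊗ μ_s` is `2 G_s(z) H_s(z)`,
and the factor `2` cancels the `1 / 2` of the equation.

The real and imaginary parts are reassembled by pulling real-linear maps through the time
integral, for which `(d/ds) R(s, s)` has to be integrable up to time `0`. This holds because, by
Darboux's theorem, it keeps its sign between its finitely many zeros, and the derivative of a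
monotone function which is continuous up to the boundary is integrable.
-/

section IntegrableDeriv

variable {g g' : ℝ → ℝ} {a b : ℝ}

lemma intervalIntegrable_of_hasDerivAt_of_ne_zero (hab : a ≤ b)
    (hg : ContinuousOn g (Set.Icc a b)) (hd : ∀ x ∈ Set.Ioo a b, HasDerivAt g (g' x) x)
    (h0 : ∀ x ∈ Set.Ioo a b, g' x ≠ 0) : IntervalIntegrable g' volume a b := by
  rw [intervalIntegrable_iff_integrableOn_Ioc_of_le hab]
  rcases hasDerivWithinAt_forall_lt_or_forall_gt_of_forall_ne (convex_Ioo a b)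
    (fun x hx => (hd x hx).hasDerivWithinAt) h0 with hneg | hpos
  · exact integrable_neg_iff.mp <| intervalIntegral.integrableOn_deriv_of_nonneg hg.neg
      (fun x hx => (hd x hx).neg) fun x hx => neg_nonneg.mpr (hneg x hx).le
  · exact intervalIntegral.integrableOn_deriv_of_nonneg hg hd fun x hx => (hpos x hx).le

lemma intervalIntegrable_of_hasDerivAt_of_finite_zeros (hab : a ≤ b)
    (hg : ContinuousOn g (Set.Icc a b)) (hd : ∀ x ∈ Set.Ioo a b, HasDerivAt g (g' x) x)
    (hfin : {x ∈ Set.Ioo a b | g' x = 0}.Finite) : IntervalIntegrable g' volume a b := by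
  obtain ⟨Z, hZ, hzeros⟩ : ∃ Z : Set ℝ, Z.Finite ∧ ∀ x ∈ Set.Ioo a b, g' x = 0 → x ∈ Z :=
    ⟨_, hfin, fun x hx h0 => ⟨hx, h0⟩⟩
  clear hfin
  induction Z, hZ using Set.Finite.induction_on generalizing a b with
  | empty => exact intervalIntegrable_of_hasDerivAt_of_ne_zero hab hg hd hzeros
  | @insert c Z _ _ ih =>
    by_cases hc : c ∈ Set.Ioo a b
    · have hleft : Set.Ioo a c ⊆ Set.Ioo a b := Set.Ioo_subset_Ioo_right hc.2.le
      have hright : Set.Ioo c b ⊆ Set.Ioo a b := Set.Ioo_subset_Ioo_left hc.1.le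
      exact (ih hc.1.le (hg.mono (Set.Icc_subset_Icc_right hc.2.le)) (fun x hx => hd x (hleft hx))
          fun x hx h0 => (hzeros x (hleft hx) h0).resolve_left hx.2.ne).trans
        (ih hc.2.le (hg.mono (Set.Icc_subset_Icc_left hc.1.le)) (fun x hx => hd x (hright hx))
          fun x hx h0 => (hzeros x (hright hx) h0).resolve_left hx.1.ne')
    · exact ih hab hg hd fun x hx h0 =>
        (hzeros x hx h0).resolve_left fun hxc => hc (hxc ▸ hx)

end IntegrableDeriv

lemma CondH1.intervalIntegrable_deriv_diag {R : ℝ → ℝ → ℝ} (hR : CondH1 R) {t : ℝ}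
    (ht : 0 ≤ t) : IntervalIntegrable (deriv fun u => R u u) volume 0 t := by
  obtain ⟨hC1, hC0, hzeros, -⟩ := hR
  rcases ht.eq_or_lt with rfl | htpos
  · exact IntervalIntegrable.refl
  have hdiff (s : ℝ) (hs : 0 < s) : DifferentiableAt ℝ (fun u => R u u) s :=
    (hC1.differentiableOn one_ne_zero).differentiableAt (Ioi_mem_nhds hs)
  refine intervalIntegrable_of_hasDerivAt_of_finite_zeros (g := fun u => R u u) ht
    (fun s hs => ?_) (fun s hs => (hdiff s hs.1).hasDerivAt)
    ((hzeros t htpos).subset fun s hs => ⟨Set.Ioo_subset_Ioc_self hs.1, hs.2⟩)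
  rcases hs.1.eq_or_lt with rfl | hspos
  · exact hC0.mono Set.Icc_subset_Ici_self
  · exact (hdiff s hspos).continuousAt.continuousWithinAt

lemma deriv_ofReal_comp (f : ℝ → ℝ) (s : ℝ) :
    deriv (fun u => (f u : ℂ)) s = (deriv f s : ℝ) := by
  by_cases hf : DifferentiableAt ℝ f s
  · exact hf.hasDerivAt.ofReal_comp.deriv
  · rw [deriv_zero_of_not_differentiableAt hf, Complex.ofReal_zero]
    exact deriv_zero_of_not_differentiableAt fun hcomp =>
      hf (Complex.reCLM.differentiableAt.comp s hcomp)

section RealLinear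

variable {E G : Type*} [NormedAddCommGroup E] [NormedSpace ℝ E] [NormedAddCommGroup G]
  [NormedSpace ℝ G]

lemma isCb3_clm_comp (L : E →L[ℝ] ℝ) {F : ℝ → E} (hF : ContDiff ℝ 3 F)
    (hbdd : ∀ k ≤ 3, ∃ C : ℝ, ∀ x, ‖iteratedDeriv k F x‖ ≤ C) : IsCb3 fun x => L (F x) := by
  refine ⟨L.contDiff.comp hF, fun k hk => ?_⟩
  obtain ⟨C, hC⟩ := hbdd k hk
  refine ⟨‖L‖ * C, fun x => ?_⟩
  calc |iteratedDeriv k (fun x => L (F x)) x|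
      = ‖iteratedFDeriv ℝ k (L ∘ F) x‖ := by
        rw [norm_iteratedFDeriv_eq_norm_iteratedDeriv, Real.norm_eq_abs, Function.comp_def]
    _ ≤ ‖L‖ * ‖iteratedFDeriv ℝ k F x‖ :=
        L.norm_iteratedFDeriv_comp_left hF.contDiffAt (by exact_mod_cast hk)
    _ ≤ ‖L‖ * C := by
        rw [norm_iteratedFDeriv_eq_norm_iteratedDeriv]
        gcongr
        exact hC x

lemma deriv_continuousLinearMap_comp (L : E →L[ℝ] G) {F F' : ℝ → E}
    (hF : ∀ x, HasDerivAt F (F' x) x) : deriv (fun x => L (F x)) = fun x => L (F' x) :=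
  funext fun x => (L.hasFDerivAt.comp_hasDerivAt x (hF x)).deriv

lemma integral_integral_clm_mul_add_mul {X 𝕜 : Type*} [MeasurableSpace X] [RCLike 𝕜]
    {ν : Measure X} {f g : X → 𝕜} [CompleteSpace G] (hf : Integrable f ν) (hg : Integrable g ν)
    (L : 𝕜 →L[ℝ] G) :
    ∫ x, ∫ y, L (f x * g y + g x * f y) ∂ν ∂ν = (2 : ℝ) • L ((∫ x, f x ∂ν) * ∫ x, g x ∂ν) := by
  have hinner (x : X) : ∫ y, L (f x * g y + g x * f y) ∂ν =
      L (f x * (∫ y, g y ∂ν) + g x * ∫ y, f y ∂ν) := by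
    rw [L.integral_comp_comm ((hg.const_mul _).fun_add (hf.const_mul _)),
      integral_add (hg.const_mul _) (hf.const_mul _), integral_const_mul, integral_const_mul]
  simp only [hinner]
  rw [L.integral_comp_comm ((hf.mul_const _).fun_add (hg.mul_const _)),
    integral_add (hf.mul_const _) (hg.mul_const _), integral_mul_const, integral_mul_const,
    mul_comm (∫ x, g x ∂ν), map_add, two_smul]

end RealLinear

lemma continuous_integral_boundedContinuousFunction_rclike {Ω 𝕜 : Type*} [RCLike 𝕜]
    [MeasurableSpace Ω] [TopologicalSpace Ω] [OpensMeasurableSpace Ω]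
    (f : BoundedContinuousFunction Ω 𝕜) :
    Continuous fun ν : ProbabilityMeasure Ω => ∫ x, f x ∂(ν : Measure Ω) :=
  continuous_iff_continuousAt.mpr fun _ =>
    (ProbabilityMeasure.tendsto_iff_forall_integral_rclike_tendsto 𝕜).mp Filter.tendsto_id f

section CauchyKernel

variable {z : ℂ}

lemma ofReal_sub_ne_zero (hz : z.im ≠ 0) (x : ℝ) : (x : ℂ) - z ≠ 0 :=
  fun h => hz (by simpa using congrArg Complex.im h)

lemma norm_inv_ofReal_sub_le (hz : z.im ≠ 0) (x : ℝ) : ‖((x : ℂ) - z)⁻¹‖ ≤ |z.im|⁻¹ := by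
  rw [norm_inv]
  exact inv_anti₀ (abs_pos.mpr hz) (by simpa using Complex.abs_im_le_norm ((x : ℂ) - z))

/-- The Cauchy kernel `x ↦ (x - z)⁻¹` of a non-real point `z`, bundled as a bounded continuous
function on `ℝ` so that its powers are integrable and pair continuously with probability
measures. -/
noncomputable def cauchyKernel (hz : z.im ≠ 0) : BoundedContinuousFunction ℝ ℂ :=
  .ofNormedAddCommGroup (fun x : ℝ => ((x : ℂ) - z)⁻¹)
    ((Complex.continuous_ofReal.sub continuous_const).inv₀ (ofReal_sub_ne_zero hz))
    |z.im|⁻¹ (norm_inv_ofReal_sub_le hz)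

lemma cauchyKernel_apply (hz : z.im ≠ 0) (x : ℝ) : cauchyKernel hz x = ((x : ℂ) - z)⁻¹ := rfl

lemma cauchyKernel_sub_cauchyKernel (hz : z.im ≠ 0) (x y : ℝ) :
    cauchyKernel hz x - cauchyKernel hz y = (y - x) * (cauchyKernel hz x * cauchyKernel hz y) := by
  have hx := ofReal_sub_ne_zero hz x
  have hy := ofReal_sub_ne_zero hz y
  simp only [cauchyKernel_apply]
  field_simp
  ring

lemma hasDerivAt_cauchyKernel (hz : z.im ≠ 0) (x : ℝ) :
    HasDerivAt (cauchyKernel hz) (-cauchyKernel hz x ^ 2) x := by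
  refine (((hasDerivAt_id x).ofReal_comp.sub_const z).inv
    (ofReal_sub_ne_zero hz x)).congr_deriv ?_
  simp [cauchyKernel_apply, neg_div]

lemma hasDerivAt_cauchyKernel_pow (hz : z.im ≠ 0) (n : ℕ) (x : ℝ) :
    HasDerivAt (fun x => cauchyKernel hz x ^ n) (-n * cauchyKernel hz x ^ (n + 1)) x := by
  refine ((hasDerivAt_cauchyKernel hz x).pow n).congr_deriv ?_
  cases n with
  | zero => simp
  | succ n =>
    simp only [Nat.add_sub_cancel]
    ring

lemma contDiff_cauchyKernel (hz : z.im ≠ 0) {n : WithTop ℕ∞} : ContDiff ℝ n (cauchyKernel hz) :=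
  (Complex.ofRealCLM.contDiff.sub contDiff_const).inv (ofReal_sub_ne_zero hz)

lemma iteratedDeriv_cauchyKernel (hz : z.im ≠ 0) (n : ℕ) :
    iteratedDeriv n (cauchyKernel hz) =
      fun x => (-1) ^ n * (n.factorial : ℂ) * cauchyKernel hz x ^ (n + 1) := by
  induction n with
  | zero => simp
  | succ n ih =>
    rw [iteratedDeriv_succ, ih]
    funext x
    refine ((hasDerivAt_cauchyKernel_pow hz (n + 1) x).const_mul
      ((-1) ^ n * (n.factorial : ℂ))).deriv.trans ?_
    rw [Nat.factorial_succ]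
    push_cast
    ring

lemma norm_iteratedDeriv_cauchyKernel_le (hz : z.im ≠ 0) (n : ℕ) (x : ℝ) :
    ‖iteratedDeriv n (cauchyKernel hz) x‖ ≤ n.factorial * ‖cauchyKernel hz‖ ^ (n + 1) := by
  simp only [iteratedDeriv_cauchyKernel, norm_mul, norm_pow, norm_neg, norm_one, one_pow, one_mul,
    Complex.norm_natCast]
  gcongr
  exact (cauchyKernel hz).norm_coe_le_norm x

lemma isCb3_clm_cauchyKernel (hz : z.im ≠ 0) (L : ℂ →L[ℝ] ℝ) :
    IsCb3 fun x => L (cauchyKernel hz x) :=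
  isCb3_clm_comp L (contDiff_cauchyKernel hz)
    fun k _ => ⟨_, norm_iteratedDeriv_cauchyKernel_le hz k⟩

lemma diffQuot_clm_cauchyKernel (hz : z.im ≠ 0) (L : ℂ →L[ℝ] ℝ) (x y : ℝ) :
    diffQuot (fun x => L (cauchyKernel hz x)) x y =
      L (cauchyKernel hz x * cauchyKernel hz y ^ 2 +
        cauchyKernel hz x ^ 2 * cauchyKernel hz y) := by
  have hderiv := deriv_continuousLinearMap_comp L (hasDerivAt_cauchyKernel hz)
  unfold diffQuot
  split_ifs with hxy
  · subst hxy
    rw [hderiv, deriv_continuousLinearMap_comp L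
      fun x => (hasDerivAt_cauchyKernel_pow hz 2 x).fun_neg]
    push_cast
    ring_nf
  · rw [hderiv, div_eq_iff (sub_ne_zero.mpr hxy), mul_comm, ← smul_eq_mul, ← map_smul, ← map_sub,
      Complex.real_smul]
    congr 1
    push_cast
    linear_combination
      -(cauchyKernel hz x + cauchyKernel hz y) * cauchyKernel_sub_cauchyKernel hz x y

lemma integral_diffQuot_clm_cauchyKernel (hz : z.im ≠ 0) (L : ℂ →L[ℝ] ℝ) (ν : Measure ℝ)
    [IsFiniteMeasure ν] :
    ∫ x, ∫ y, diffQuot (fun x => L (cauchyKernel hz x)) x y ∂ν ∂ν =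
      2 * L ((∫ x, cauchyKernel hz x ∂ν) * ∫ x, cauchyKernel hz x ^ 2 ∂ν) := by
  simp only [diffQuot_clm_cauchyKernel]
  exact integral_integral_clm_mul_add_mul ((cauchyKernel hz).integrable ν)
    ((cauchyKernel hz ^ 2).integrable ν) L

end CauchyKernel

lemma SolvesFlow.clm_integral_cauchyKernel {R : ℝ → ℝ → ℝ} {μ : ℝ → ProbabilityMeasure ℝ}
    (hμ : SolvesFlow R μ) {z : ℂ} (hz : z.im ≠ 0) (L : ℂ →L[ℝ] ℝ) {t : ℝ} (ht : 0 ≤ t) :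
    L (∫ x, cauchyKernel hz x ∂(μ t : Measure ℝ)) =
      L (∫ x, cauchyKernel hz x ∂(μ 0 : Measure ℝ)) +
        ∫ s in (0 : ℝ)..t, deriv (fun u => R u u) s *
          L ((∫ x, cauchyKernel hz x ∂(μ s : Measure ℝ)) *
            ∫ x, cauchyKernel hz x ^ 2 ∂(μ s : Measure ℝ)) := by
  have hflow := hμ t ht _ (isCb3_clm_cauchyKernel hz L)
  simp only [integral_diffQuot_clm_cauchyKernel, mul_left_comm _ (2 : ℝ)] at hflow
  rwa [L.integral_comp_comm ((cauchyKernel hz).integrable _),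
    L.integral_comp_comm ((cauchyKernel hz).integrable _), intervalIntegral.integral_const_mul,
    one_div, inv_mul_cancel_left₀ two_ne_zero] at hflow

theorem cauchy_transform_evolution_general {R : ℝ → ℝ → ℝ} {μ : ℝ → ProbabilityMeasure ℝ}
    (hμ : SolvesFlow R μ) {t : ℝ} (ht : 0 ≤ t) (hμc : ContinuousOn μ (Set.Icc 0 t))
    (hR : IntervalIntegrable (deriv fun u => R u u) volume 0 t) {z : ℂ} (hz : z.im ≠ 0) :
    ∫ x, ((x : ℂ) - z)⁻¹ ∂(μ t : Measure ℝ)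
      = (∫ x, ((x : ℂ) - z)⁻¹ ∂(μ 0 : Measure ℝ))
        + ∫ s in (0 : ℝ)..t,
            ((deriv (fun u => R u u) s : ℝ) : ℂ) *
              ((∫ x, ((x : ℂ) - z)⁻¹ ∂(μ s : Measure ℝ)) *
                ∫ x, (((x : ℂ) - z) ^ 2)⁻¹ ∂(μ s : Measure ℝ)) := by
  simp only [← inv_pow, ← cauchyKernel_apply hz]
  have hcont (f : BoundedContinuousFunction ℝ ℂ) :
      ContinuousOn (fun s => ∫ x, f x ∂(μ s : Measure ℝ)) (Set.uIcc 0 t) := by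
    rw [Set.uIcc_of_le ht]
    exact (continuous_integral_boundedContinuousFunction_rclike f).comp_continuousOn hμc
  have hint : IntervalIntegrable (fun s => ((deriv (fun u => R u u) s : ℝ) : ℂ) *
      ((∫ x, cauchyKernel hz x ∂(μ s : Measure ℝ)) *
        ∫ x, cauchyKernel hz x ^ 2 ∂(μ s : Measure ℝ))) volume 0 t :=
    IntervalIntegrable.mul_continuousOn (hR.imp (·.ofReal) (·.ofReal))
      ((hcont (cauchyKernel hz)).mul (hcont (cauchyKernel hz ^ 2)))
  refine (SeparatingDual.eq_iff_forall_dual_eq (R := ℝ)).mpr fun L => ?_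
  rw [hμ.clm_integral_cauchyKernel hz L ht, map_add, ← L.intervalIntegral_comp_comm hint]
  simp only [← Complex.real_smul, map_smul, smul_eq_mul]

/-- **Evolution of the Cauchy transform.** If `(μ_t)` is a weakly continuous solution of the
measure-flow equation for `R` (satisfying (H1)), then for every `z` in the upper half-plane and
`t ≥ 0`, `G_t(z) = G_0(z) + ∫_0^t (d/ds)R(s,s)·G_s(z)·H_s(z) ds`, where
`G_s(z) = ∫ (x−z)⁻¹ dμ_s` and `H_s(z) = ∫ (x−z)⁻² dμ_s`. -/
theorem cauchy_transform_evolution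
    (R : ℝ → ℝ → ℝ) (hR : CondH1 R)
    (μ : ℝ → ProbabilityMeasure ℝ)
    (hμc : ContinuousOn μ (Set.Ici 0))
    (hμ : SolvesFlow R μ) :
    ∀ z : ℂ, 0 < z.im → ∀ t ≥ (0 : ℝ),
      ∫ x, ((x : ℂ) - z)⁻¹ ∂(μ t : Measure ℝ)
        = (∫ x, ((x : ℂ) - z)⁻¹ ∂(μ 0 : Measure ℝ))
          + ∫ s in (0 : ℝ)..t,
              (deriv (fun u => R u u) s : ℂ) *
                ((∫ x, ((x : ℂ) - z)⁻¹ ∂(μ s : Measure ℝ)) *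
                  ∫ x, (((x : ℂ) - z) ^ 2)⁻¹ ∂(μ s : Measure ℝ)) := by
  intro z hz t ht
  simpa only [deriv_ofReal_comp] using cauchy_transform_evolution_general hμ ht
    (hμc.mono Set.Icc_subset_Ici_self) (hR.intervalIntegrable_deriv_diag ht) hz.ne'
end

section
/- Let R : [0,∞)×[0,∞) → ℝ satisfy condition (H1) with R(0,0) = 0, and let (μ_t)_{t≥0} be a weakly continuous family of Borel probability measures on ℝ solving the measure-flow equation for R with initial value μ_0 = δ_0 (the Dirac mass at 0). Then for every t ≥ 0 with R(t,t) > 0, the measure μ_t is the semicircle distribution with variance R(t,t). -/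
open MeasureTheory

/-- The semicircle distribution with variance `v`: the measure on `ℝ` with density
`x ↦ (2πv)⁻¹ √(4v − x²)` (supported on `[−2√v, 2√v]`). -/
noncomputable def semicircle (v : ℝ) : Measure ℝ :=
  volume.withDensity fun x => ENNReal.ofReal ((2 * Real.pi * v)⁻¹ * Real.sqrt (4 * v - x ^ 2))

/-!
Tested against the exponentials `x ↦ exp(iux)`, the measure-flow equation becomes, for the
characteristic functions `Φ_t` of `μ_t`,
`Φ_t(u) = Φ_0(u) - (u²/2) ∫₀ᵗ (d/ds)R(s,s) ∫₀¹ Φ_s(au) Φ_s((1-a)u) da ds`, because the difference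
quotient of `f'` is the average of `f''` over the segment from `y` to `x`. The characteristic
function of the semicircle distribution of variance `v` is `F(v u²)`, where
`F(w) = ∑ₙ (-1)ⁿ Cₙ wⁿ / (2n)!` and `Cₙ` are the Catalan numbers; Segner's recurrence for `Cₙ` says
that `2 F'(w) = -∫₀¹ F(w a²) F(w (1-a)²) da`, so `(s, u) ↦ F((R(s,s) - R(0,0)) u²)` solves the same
equation. Solutions agree because the nonlinearity is locally Lipschitz and the weight
`|(d/ds)R(s,s)|` is integrable in time: the Picard iterates of the difference are bounded by the
terms of an exponential series. The weight may blow up at `0`, but it is integrable because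
`s ↦ R(s,s)` is monotone near `0`.
-/

open Set Filter Topology
open Finset.HasAntidiagonal (antidiagonal)
open scoped Nat NNReal

namespace SemicircleFlow

lemma hasDerivAt_tsum_mul_pow {𝕜 : Type*} [RCLike 𝕜] {c : ℕ → 𝕜}
    (hc : ∀ w : 𝕜, Summable fun k => ‖c k * w ^ k‖) (w : 𝕜) :
    HasDerivAt (fun z => ∑' k, c k * z ^ k) (∑' k : ℕ, (k + 1) * c (k + 1) * w ^ k) w := by
  set r : ℝ := ‖w‖ + 1
  have hr : 1 ≤ r := le_add_of_nonneg_left (norm_nonneg w)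
  have hbound : ∀ (k : ℕ) (z : 𝕜), z ∈ Metric.ball 0 r →
      ‖c k * (k * z ^ (k - 1))‖ ≤ ‖c k * ((2 * r : ℝ) : 𝕜) ^ k‖ := by
    intro k z hz
    have hz' : ‖z‖ ≤ r := (mem_ball_zero_iff.mp hz).le
    have hk : (k : ℝ) ≤ 2 ^ k := by exact_mod_cast k.lt_two_pow_self.le
    rw [norm_mul, norm_mul, norm_mul, RCLike.norm_natCast, norm_pow, norm_pow,
      RCLike.norm_of_nonneg (by positivity), mul_pow]
    gcongr
    calc ‖z‖ ^ (k - 1) ≤ r ^ (k - 1) := by gcongr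
      _ ≤ r ^ k := pow_le_pow_right₀ hr (Nat.sub_le k 1)
  have hw : w ∈ Metric.ball (0 : 𝕜) r := by simp [r]
  have hsum : Summable fun k : ℕ => c k * (k * w ^ (k - 1)) :=
    .of_norm_bounded (hc _) fun k => hbound k w hw
  have hderiv := hasDerivAt_tsum_of_isPreconnected (hc ((2 * r : ℝ) : 𝕜)) Metric.isOpen_ball
    (convex_ball (0 : 𝕜) r).isPreconnected
    (fun k z _ => (hasDerivAt_pow k z).const_mul (c k)) hbound hw (hc w).of_norm hw
  rw [hsum.tsum_eq_zero_add] at hderiv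
  refine hderiv.congr_deriv ?_
  simp only [Nat.cast_zero, zero_mul, mul_zero, zero_add, Nat.cast_add, Nat.cast_one,
    Nat.add_sub_cancel]
  exact tsum_congr fun k => by ring

lemma integral_pow_mul_one_sub_pow (m n : ℕ) :
    ∫ a in (0 : ℝ)..1, a ^ m * (1 - a) ^ n = (m ! * n ! : ℝ) / (m + n + 1)! := by
  have hre : ∀ k : ℕ, 0 < (k + 1 : ℂ).re := fun k => by
    simpa only [Complex.add_re, Complex.natCast_re, Complex.one_re] using k.cast_add_one_pos
  have h := Complex.betaIntegral_eq_Gamma_mul_div (m + 1) (n + 1) (hre m) (hre n)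
  rw [show (m + 1 + (n + 1) : ℂ) = ((m + n + 1 : ℕ) : ℂ) + 1 by push_cast; ring,
    Complex.Gamma_nat_eq_factorial, Complex.Gamma_nat_eq_factorial,
    Complex.Gamma_nat_eq_factorial, Complex.betaIntegral] at h
  simp only [add_sub_cancel_right, Complex.cpow_natCast] at h
  rw [← Complex.ofReal_inj, ← intervalIntegral.integral_ofReal]
  push_cast
  exact h

lemma sum_antidiagonal_mul_pow_eq_integral (c : ℕ → ℝ) (w : ℝ) (n : ℕ) :
    (∑ p ∈ antidiagonal n, c p.1 * c p.2 * ((2 * p.1)! * (2 * p.2)! / (2 * n + 1)!)) * w ^ n =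
      ∫ a in (0 : ℝ)..1, ∑ p ∈ antidiagonal n,
        (c p.1 * (w * a ^ 2) ^ p.1) * (c p.2 * (w * (1 - a) ^ 2) ^ p.2) := by
  rw [intervalIntegral.integral_finsetSum
    (fun p _ => Continuous.intervalIntegrable (by fun_prop) _ _), Finset.sum_mul]
  refine Finset.sum_congr rfl fun p hp => ?_
  obtain rfl : p.1 + p.2 = n := Finset.HasAntidiagonal.mem_antidiagonal.mp hp
  have hbeta := integral_pow_mul_one_sub_pow (2 * p.1) (2 * p.2)
  rw [← mul_add] at hbeta
  rw [← hbeta, mul_right_comm, ← intervalIntegral.integral_const_mul]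
  congr 1 with a
  generalize 1 - a = b
  ring

lemma hasSum_integral_tsum_mul_tsum {c : ℕ → ℝ} (hc : ∀ w, Summable fun k => ‖c k * w ^ k‖)
    (w : ℝ) :
    HasSum (fun n => (∑ p ∈ antidiagonal n,
        c p.1 * c p.2 * ((2 * p.1)! * (2 * p.2)! / (2 * n + 1)!)) * w ^ n)
      (∫ a in (0 : ℝ)..1, (∑' k, c k * (w * a ^ 2) ^ k) * ∑' k, c k * (w * (1 - a) ^ 2) ^ k) := by
  have hbound :=
    (summable_norm_sum_mul_antidiagonal_of_summable_norm (hc w).norm (hc w).norm).of_norm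
  have hshrink : ∀ {b : ℝ}, b ∈ Icc (0 : ℝ) 1 → ∀ k : ℕ,
      ‖c k * (w * b ^ 2) ^ k‖ ≤ ‖c k * w ^ k‖ := by
    intro b hb k
    rw [mul_pow, ← mul_assoc, norm_mul _ ((b ^ 2) ^ k), ← pow_mul, norm_pow,
      Real.norm_of_nonneg hb.1]
    exact mul_le_of_le_one_right (norm_nonneg _) (pow_le_one₀ hb.1 hb.2)
  simp only [sum_antidiagonal_mul_pow_eq_integral]
  refine intervalIntegral.hasSum_integral_of_dominated_convergence
    (fun n _ => ∑ p ∈ antidiagonal n, ‖c p.1 * w ^ p.1‖ * ‖c p.2 * w ^ p.2‖)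
    (fun n => Continuous.aestronglyMeasurable (by fun_prop))
    (fun n => .of_forall fun a ha => ?_) (.of_forall fun _ _ => hbound)
    intervalIntegrable_const (.of_forall fun a _ => ?_)
  · rw [uIoc_of_le zero_le_one] at ha
    refine norm_sum_le_of_le _ fun p _ => ?_
    rw [norm_mul]
    have ha' : a ∈ Icc (0 : ℝ) 1 := Ioc_subset_Icc_self ha
    gcongr
    · exact hshrink ha' p.1
    · exact hshrink ⟨sub_nonneg.mpr ha'.2, sub_le_self 1 ha'.1⟩ p.2
  · rw [tsum_mul_tsum_eq_tsum_sum_antidiagonal_of_summable_norm (hc _) (hc _)]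
    exact (summable_norm_sum_mul_antidiagonal_of_summable_norm (hc _) (hc _)).of_norm.hasSum

/-- The coefficients of the power series in `v u²` of the characteristic function at `u` of the
semicircle distribution with variance `v`, whose `2k`-th moment is `vᵏ` times the `k`-th Catalan
number. -/
noncomputable def charCoeff (k : ℕ) : ℝ := (-1) ^ k * catalan k / (2 * k)!

/-- The entire function `F` such that `u ↦ F (v u²)` is the characteristic function of the
semicircle distribution with variance `v > 0`. It is defined for negative `v` too, because the
diagonal of a kernel may a priori dip below its initial value. -/
noncomputable def charSeries (w : ℝ) : ℝ := ∑' k, charCoeff k * w ^ k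

lemma abs_charCoeff_le (k : ℕ) : |charCoeff k| ≤ 4 ^ k / k ! := by
  have hcat : catalan k ≤ 4 ^ k := by
    rw [catalan_eq_centralBinom_div]
    exact (Nat.div_le_self _ _).trans (Nat.centralBinom_le_four_pow k)
  rw [charCoeff, abs_div, abs_mul, abs_pow, abs_neg, abs_one, one_pow, one_mul, Nat.abs_cast,
    Nat.abs_cast]
  gcongr
  · exact_mod_cast hcat
  · omega

lemma summable_norm_charCoeff_mul_pow (w : ℝ) : Summable fun k => ‖charCoeff k * w ^ k‖ := by
  refine .of_nonneg_of_le (fun _ => norm_nonneg _) (fun k => ?_)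
    (Real.summable_pow_div_factorial (4 * |w|))
  rw [norm_mul, norm_pow, mul_pow, mul_div_right_comm]
  gcongr
  exacts [abs_charCoeff_le k, le_rfl]

lemma hasSum_charSeries (w : ℝ) : HasSum (fun k => charCoeff k * w ^ k) (charSeries w) :=
  (summable_norm_charCoeff_mul_pow w).of_norm.hasSum

lemma charSeries_zero : charSeries 0 = 1 := by
  rw [charSeries, tsum_eq_single 0 fun k hk => by simp [hk]]
  simp [charCoeff]

/-- Segner's recurrence for the Catalan numbers. -/
lemma succ_mul_charCoeff_succ (n : ℕ) :
    (n + 1) * charCoeff (n + 1) = -(1 / 2) * ∑ p ∈ antidiagonal n,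
      charCoeff p.1 * charCoeff p.2 * ((2 * p.1)! * (2 * p.2)! / (2 * n + 1)!) := by
  have hterm : ∀ p ∈ antidiagonal n,
      charCoeff p.1 * charCoeff p.2 * ((2 * p.1)! * (2 * p.2)! / (2 * n + 1)!) =
        (-1) ^ n / (2 * n + 1)! * ((catalan p.1 * catalan p.2 : ℕ) : ℝ) := by
    intro p hp
    obtain rfl : p.1 + p.2 = n := Finset.HasAntidiagonal.mem_antidiagonal.mp hp
    rw [charCoeff, charCoeff, Nat.cast_mul]
    field_simp
    ring
  rw [Finset.sum_congr rfl hterm, ← Finset.mul_sum, ← Nat.cast_sum, ← catalan_succ', charCoeff,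
    mul_add_one, Nat.factorial_succ (2 * n + 1)]
  push_cast
  field_simp
  ring

lemma hasDerivAt_charSeries (w : ℝ) :
    HasDerivAt charSeries
      (-(1 / 2) * ∫ a in (0 : ℝ)..1, charSeries (w * a ^ 2) * charSeries (w * (1 - a) ^ 2)) w := by
  have hsum := (hasSum_integral_tsum_mul_tsum summable_norm_charCoeff_mul_pow w).mul_left (-(1 / 2))
  refine (hasDerivAt_tsum_mul_pow summable_norm_charCoeff_mul_pow w).congr_deriv ?_
  simp only [succ_mul_charCoeff_succ, mul_assoc (-(1 / 2 : ℝ))]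
  exact hsum.tsum_eq

lemma contDiff_charSeries : ContDiff ℝ 1 charSeries := by
  have hcont : Continuous charSeries :=
    continuous_iff_continuousAt.mpr fun w => (hasDerivAt_charSeries w).continuousAt
  rw [contDiff_one_iff_deriv, funext fun w => (hasDerivAt_charSeries w).deriv]
  exact ⟨fun w => (hasDerivAt_charSeries w).differentiableAt, continuous_const.mul
    (intervalIntegral.continuous_parametric_intervalIntegral_of_continuous' (by fun_prop) 0 1)⟩

section AbsolutelyContinuous

variable {a b : ℝ}

lemma absolutelyContinuousOnInterval_congr {X : Type*} [PseudoMetricSpace X] {F G : ℝ → X}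
    (hF : AbsolutelyContinuousOnInterval F a b) (hFG : EqOn F G (uIcc a b)) :
    AbsolutelyContinuousOnInterval G a b := by
  rw [absolutelyContinuousOnInterval_iff] at hF ⊢
  intro ε hε
  obtain ⟨δ, hδ, hFδ⟩ := hF ε hε
  refine ⟨δ, hδ, fun E hE hlen => (Finset.sum_congr rfl fun i hi => ?_).trans_lt (hFδ E hE hlen)⟩
  rw [hFG (hE.1 i hi).1, hFG (hE.1 i hi).2]

lemma absolutelyContinuousOnInterval_of_intervalIntegrable_deriv {g : ℝ → ℝ} (hab : a ≤ b)
    (hg : ContinuousOn g (Icc a b)) (hgd : DifferentiableOn ℝ g (Ioo a b))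
    (hint : IntervalIntegrable (deriv g) volume a b) :
    AbsolutelyContinuousOnInterval g a b := by
  have hconst : AbsolutelyContinuousOnInterval (fun _ => g a) a b :=
    (LipschitzWith.const (g a)).lipschitzOnWith.absolutelyContinuousOnInterval
  refine absolutelyContinuousOnInterval_congr (hconst.add
    (hint.absolutelyContinuousOnInterval_intervalIntegral left_mem_uIcc)) fun s hs => ?_
  rw [uIcc_of_le hab] at hs
  have hsub : Ioo a s ⊆ Ioo a b := Ioo_subset_Ioo_right hs.2
  simp only [Pi.add_apply]
  rw [intervalIntegral.integral_eq_sub_of_hasDerivAt_of_le hs.1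
    (hg.mono (Icc_subset_Icc_right hs.2))
    (fun x hx => (hgd.differentiableAt (isOpen_Ioo.mem_nhds (hsub hx))).hasDerivAt)
    (hint.mono_set (uIcc_subset_uIcc_left (uIcc_of_le hab ▸ hs))), add_sub_cancel]

lemma intervalIntegrable_deriv_of_deriv_ne_zero {g : ℝ → ℝ} (hab : a ≤ b)
    (hg : ContinuousOn g (Icc a b)) (hg' : ∀ x ∈ Ioo a b, deriv g x ≠ 0) :
    IntervalIntegrable (deriv g) volume a b := by
  have hint : interior (Icc a b) = Ioo a b := interior_Icc
  have hd (x) (hx : x ∈ Ioo a b) : HasDerivWithinAt g (deriv g x) (Ioo a b) x :=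
    (differentiableAt_of_deriv_ne_zero (hg' x hx)).hasDerivAt.hasDerivWithinAt
  rcases hasDerivWithinAt_forall_lt_or_forall_gt_of_forall_ne (convex_Ioo a b) hd hg' with
    hneg | hpos
  · have hanti : AntitoneOn g (uIcc a b) := uIcc_of_le hab ▸
      (strictAntiOn_of_deriv_neg (convex_Icc a b) hg (hint ▸ hneg)).antitoneOn
    simpa [Pi.neg_def] using hanti.neg.intervalIntegrable_deriv.neg
  · have hmono : MonotoneOn g (uIcc a b) := uIcc_of_le hab ▸
      (strictMonoOn_of_deriv_pos (convex_Icc a b) hg (hint ▸ hpos)).monotoneOn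
    exact hmono.intervalIntegrable_deriv

lemma intervalIntegrable_deriv_of_finite_zeros {g : ℝ → ℝ} (hg : ContinuousOn g (Icc a b))
    (hg' : ContinuousOn (deriv g) (Ioc a b)) (hab : a < b)
    (hzeros : {s ∈ Ioc a b | deriv g s = 0}.Finite) :
    IntervalIntegrable (deriv g) volume a b := by
  have hne : ∀ᶠ s in 𝓝[>] a, s ∈ {s ∈ Ioc a b | deriv g s = 0}ᶜ :=
    mem_nhdsWithin_of_mem_nhds (hzeros.isClosed.isOpen_compl.mem_nhds fun h => h.1.1.false)
  obtain ⟨c, hc, hcne⟩ := (mem_nhdsGT_iff_exists_mem_Ioc_Ioo_subset hab).mp hne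
  have hleft : IntervalIntegrable (deriv g) volume a c :=
    intervalIntegrable_deriv_of_deriv_ne_zero hc.1.le (hg.mono (Icc_subset_Icc_right hc.2))
      fun s hs h => hcne hs ⟨⟨hs.1, hs.2.le.trans hc.2⟩, h⟩
  have hright : IntervalIntegrable (deriv g) volume c b := ContinuousOn.intervalIntegrable <|
    hg'.mono (uIcc_of_le hc.2 ▸ fun s hs => ⟨hc.1.trans_le hs.1, hs.2⟩)
  exact hleft.trans hright

lemma absolutelyContinuousOnInterval_comp {X Y : Type*} [PseudoMetricSpace X]
    [PseudoMetricSpace Y] {F : X → Y} {g : ℝ → X} {s : Set X} {K : ℝ≥0}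
    (hF : LipschitzOnWith K F s) (hg : AbsolutelyContinuousOnInterval g a b)
    (hgs : MapsTo g (uIcc a b) s) : AbsolutelyContinuousOnInterval (F ∘ g) a b := by
  rw [AbsolutelyContinuousOnInterval] at hg ⊢
  refine squeeze_zero' (.of_forall fun E => Finset.sum_nonneg fun _ _ => dist_nonneg) ?_
    (by simpa only [mul_zero] using hg.const_mul (K : ℝ))
  filter_upwards [mem_inf_of_right (mem_principal_self _)] with E hE
  rw [Finset.mul_sum]
  exact Finset.sum_le_sum fun i hi => hF.dist_le_mul _ (hgs (hE.1 i hi).1) _ (hgs (hE.1 i hi).2)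

lemma integral_deriv_comp_mul_deriv_eq_sub {F g : ℝ → ℝ} (hF : ContDiff ℝ 1 F)
    (hg : AbsolutelyContinuousOnInterval g a b) :
    ∫ s in a..b, deriv F (g s) * deriv g s = F (g b) - F (g a) := by
  obtain ⟨C, hC⟩ := hg.exists_bound
  obtain ⟨K, hK⟩ := (hF.contDiffOn (s := Icc (-C) C)).exists_lipschitzOnWith (by decide)
    (convex_Icc _ _) isCompact_Icc
  have hFg := absolutelyContinuousOnInterval_comp hK hg fun s hs => abs_le.mp (hC s hs)
  calc ∫ s in a..b, deriv F (g s) * deriv g s = ∫ s in a..b, deriv (F ∘ g) s := by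
        refine intervalIntegral.integral_congr_ae ?_
        filter_upwards [hg.ae_differentiableAt] with s hs hsab
        exact (deriv_comp s (hF.differentiable one_ne_zero _) (hs (uIoc_subset_uIcc hsab))).symm
    _ = F (g b) - F (g a) := hFg.integral_deriv_eq_sub

lemma integral_mul_integral_pow {k : ℝ → ℝ} (hk : IntervalIntegrable k volume a b) (n : ℕ) :
    ∫ s in a..b, k s * (∫ r in a..s, k r) ^ n = (∫ r in a..b, k r) ^ (n + 1) / (n + 1) := by
  have hderiv (x : ℝ) : deriv (fun x => x ^ (n + 1) / (n + 1 : ℝ)) x = x ^ n := by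
    rw [deriv_div_const, deriv_pow_field, Nat.cast_succ, Nat.add_sub_cancel,
      mul_div_cancel_left₀ _ n.cast_add_one_ne_zero]
  have hchain := integral_deriv_comp_mul_deriv_eq_sub
    (F := fun x => x ^ (n + 1) / (n + 1 : ℝ)) (by fun_prop)
    (hk.absolutelyContinuousOnInterval_intervalIntegral left_mem_uIcc)
  simp only [hderiv] at hchain
  rw [intervalIntegral.integral_same, zero_pow n.succ_ne_zero, zero_div, sub_zero] at hchain
  rw [← hchain]
  refine intervalIntegral.integral_congr_ae ?_
  filter_upwards [hk.ae_hasDerivAt_integral] with s hs hsab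
  rw [(hs (uIoc_subset_uIcc hsab) a left_mem_uIcc).deriv, mul_comm]

/-- Picard iteration for a family of functions; the weight `k` is only integrable, so that the
`n`-th iterate is controlled by `(∫ k)ⁿ / n!`. -/
lemma nonpos_of_forall_le_integral {ι : Type*} {D : ℝ → ι → ℝ} {k : ℝ → ℝ} {B : ℝ}
    (hk : IntervalIntegrable k volume a b) (hB : ∀ t ∈ Icc a b, ∀ i, D t i ≤ B)
    (hstep : ∀ δ : ℝ → ℝ, ContinuousOn δ (Icc a b) → (∀ t ∈ Icc a b, ∀ i, D t i ≤ δ t) →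
      ∀ t ∈ Icc a b, ∀ i, D t i ≤ ∫ s in a..t, k s * δ s) {t : ℝ} (ht : t ∈ Icc a b) (i : ι) :
    D t i ≤ 0 := by
  have hab := uIcc_of_le (ht.1.trans ht.2)
  have hcont : ContinuousOn (fun t => ∫ r in a..t, k r) (Icc a b) := by
    simpa only [hab] using
      (hk.absolutelyContinuousOnInterval_intervalIntegral left_mem_uIcc).continuousOn
  have hiter (n : ℕ) : ∀ t ∈ Icc a b, ∀ i, D t i ≤ B * ((∫ r in a..t, k r) ^ n / n !) := by
    induction n with
    | zero => simpa using hB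
    | succ n ih =>
      intro t ht i
      have hkt := hk.mono_set (uIcc_subset_uIcc_left (hab ▸ ht))
      calc D t i ≤ ∫ s in a..t, k s * (B * ((∫ r in a..s, k r) ^ n / n !)) :=
            hstep _ (((hcont.pow n).div_const _).const_mul B) ih t ht i
        _ = B / n ! * ∫ s in a..t, k s * (∫ r in a..s, k r) ^ n := by
            rw [← intervalIntegral.integral_const_mul]
            congr 1 with s
            ring
        _ = B * ((∫ r in a..t, k r) ^ (n + 1) / (n + 1)!) := by
            rw [integral_mul_integral_pow hkt, Nat.factorial_succ]
            push_cast
            field_simp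
  refine ge_of_tendsto' (x := atTop) ?_ fun n => hiter n t ht i
  simpa using (FloorSemiring.tendsto_pow_div_factorial_atTop (∫ r in a..t, k r)).const_mul B

end AbsolutelyContinuous

section CharFlow

/-- The self-average `∫₀¹ Φ(a u) Φ((1 - a) u) da`, which for a characteristic function `Φ` is the
nonlinearity of the measure-flow equation read on Fourier transforms. -/
noncomputable def selfAverage (Φ : ℝ → ℂ) (u : ℝ) : ℂ :=
  ∫ a in (0 : ℝ)..1, Φ (a * u) * Φ ((1 - a) * u)

/-- A family `(Φ_s)` of functions that is separately continuous on `[0, T] × ℝ` and bounded locally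
in the second variable, which is the regularity shared by the characteristic functions of a weakly
continuous family of measures and by the explicit solutions. -/
structure IsRegularFamily (T : ℝ) (Φ : ℝ → ℝ → ℂ) : Prop where
  continuous_right : ∀ s ∈ Icc 0 T, Continuous (Φ s)
  continuousOn_left : ∀ u, ContinuousOn (fun s => Φ s u) (Icc 0 T)
  exists_bound : ∀ U, ∃ M, ∀ s ∈ Icc 0 T, ∀ u, |u| ≤ U → ‖Φ s u‖ ≤ M

/-- `Φ` solves on `[0, T]` the equation `∂ₜΦₜ(u) = -(u²/2) h(t) ∫₀¹ Φₜ(a u) Φₜ((1 - a) u) da` that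
governs the characteristic functions of a measure flow of speed `h`. The equation is integrated
in time, since `h` is only assumed to be integrable. -/
structure IsCharFlow (h : ℝ → ℝ) (T : ℝ) (Φ : ℝ → ℝ → ℂ) : Prop extends IsRegularFamily T Φ where
  eq_integral : ∀ t ∈ Icc 0 T, ∀ u,
    Φ t u = Φ 0 u - u ^ 2 / 2 * ∫ s in (0 : ℝ)..t, h s * selfAverage (Φ s) u

lemma abs_mul_le_of_mem_Icc {a u U : ℝ} (ha : a ∈ Icc (0 : ℝ) 1) (hu : |u| ≤ U) : |a * u| ≤ U := by
  rw [abs_mul, abs_of_nonneg ha.1]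
  exact (mul_le_of_le_one_left (abs_nonneg u) ha.2).trans hu

lemma norm_selfAverage_sub_le {Φ Ψ : ℝ → ℂ} {M δ U u : ℝ} (hΦc : Continuous Φ)
    (hΨc : Continuous Ψ) (hΦ : ∀ v, |v| ≤ U → ‖Φ v‖ ≤ M) (hΨ : ∀ v, |v| ≤ U → ‖Ψ v‖ ≤ M)
    (hδ : ∀ v, |v| ≤ U → ‖Φ v - Ψ v‖ ≤ δ) (hu : |u| ≤ U) :
    ‖selfAverage Φ u - selfAverage Ψ u‖ ≤ 2 * M * δ := by
  rw [selfAverage, selfAverage, ← intervalIntegral.integral_sub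
    (Continuous.intervalIntegrable (by fun_prop) _ _)
    (Continuous.intervalIntegrable (by fun_prop) _ _)]
  refine (intervalIntegral.norm_integral_le_of_norm_le_const (C := 2 * M * δ)
    fun a ha => ?_).trans (by simp)
  rw [uIoc_of_le zero_le_one] at ha
  have ha' : a ∈ Icc (0 : ℝ) 1 := Ioc_subset_Icc_self ha
  have hx : |a * u| ≤ U := abs_mul_le_of_mem_Icc ha' hu
  have hy : |(1 - a) * u| ≤ U :=
    abs_mul_le_of_mem_Icc (Icc.one_sub_mem ha') hu
  generalize a * u = x, (1 - a) * u = y at hx hy ⊢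
  calc ‖Φ x * Φ y - Ψ x * Ψ y‖ = ‖Φ x * (Φ y - Ψ y) + (Φ x - Ψ x) * Ψ y‖ := by ring_nf
    _ ≤ ‖Φ x‖ * ‖Φ y - Ψ y‖ + ‖Φ x - Ψ x‖ * ‖Ψ y‖ := by
        simpa only [norm_mul] using norm_add_le (Φ x * (Φ y - Ψ y)) ((Φ x - Ψ x) * Ψ y)
    _ ≤ M * δ + δ * M := by
        have hM : 0 ≤ M := (norm_nonneg _).trans (hΦ x hx)
        have hδ₀ : 0 ≤ δ := (norm_nonneg _).trans (hδ x hx)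
        gcongr
        exacts [hΦ x hx, hδ y hy, hδ x hx, hΨ y hy]
    _ = 2 * M * δ := by ring

namespace IsRegularFamily

variable {T : ℝ} {Φ : ℝ → ℝ → ℂ}

lemma continuousOn_selfAverage (hΦ : IsRegularFamily T Φ) (u : ℝ) :
    ContinuousOn (fun s => selfAverage (Φ s) u) (Icc 0 T) := by
  obtain ⟨M, hM⟩ := hΦ.exists_bound |u|
  intro s hs
  refine intervalIntegral.continuousWithinAt_of_dominated_interval (bound := fun _ => M * M) ?_ ?_
    intervalIntegrable_const (.of_forall fun a _ =>
      (hΦ.continuousOn_left _ s hs).mul (hΦ.continuousOn_left _ s hs))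
  · filter_upwards [self_mem_nhdsWithin] with x hx
    have := hΦ.continuous_right x hx
    exact Continuous.aestronglyMeasurable (by fun_prop)
  · filter_upwards [self_mem_nhdsWithin] with x hx
    refine .of_forall fun a ha => ?_
    rw [uIoc_of_le zero_le_one] at ha
    have ha' : a ∈ Icc (0 : ℝ) 1 := Ioc_subset_Icc_self ha
    have hleft := hM x hx _ (abs_mul_le_of_mem_Icc ha' le_rfl)
    have hright := hM x hx _
      (abs_mul_le_of_mem_Icc (Icc.one_sub_mem ha') le_rfl)
    rw [norm_mul]
    exact mul_le_mul hleft hright (norm_nonneg _) ((norm_nonneg _).trans hleft)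

lemma intervalIntegrable_mul_selfAverage (hΦ : IsRegularFamily T Φ) {h : ℝ → ℝ}
    (hh : IntervalIntegrable h volume 0 T) {t : ℝ} (ht : t ∈ Icc 0 T) (u : ℝ) :
    IntervalIntegrable (fun s => h s * selfAverage (Φ s) u) volume 0 t := by
  have hTu := uIcc_of_le (ht.1.trans ht.2)
  refine IntervalIntegrable.mono_set ?_ (uIcc_subset_uIcc_left (hTu ▸ ht))
  refine IntervalIntegrable.mul_continuousOn ⟨hh.1.ofReal, hh.2.ofReal⟩ ?_
  rw [hTu]
  exact hΦ.continuousOn_selfAverage u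

end IsRegularFamily

namespace IsCharFlow

variable {h : ℝ → ℝ} {T : ℝ} {Φ Ψ : ℝ → ℝ → ℂ}

lemma norm_sub_le_integral (hΦ : IsCharFlow h T Φ) (hΨ : IsCharFlow h T Ψ)
    (hh : IntervalIntegrable h volume 0 T) (hΦΨ : Φ 0 = Ψ 0) {M U : ℝ}
    (hM : ∀ s ∈ Icc 0 T, ∀ u, |u| ≤ U → ‖Φ s u‖ ≤ M ∧ ‖Ψ s u‖ ≤ M) {δ : ℝ → ℝ}
    (hδc : ContinuousOn δ (Icc 0 T)) (hδ : ∀ s ∈ Icc 0 T, ∀ u, |u| ≤ U → ‖Φ s u - Ψ s u‖ ≤ δ s)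
    {t u : ℝ} (ht : t ∈ Icc 0 T) (hu : |u| ≤ U) :
    ‖Φ t u - Ψ t u‖ ≤ ∫ s in (0 : ℝ)..t, U ^ 2 * M * |h s| * δ s := by
  have hsub : Icc 0 t ⊆ Icc 0 T := Icc_subset_Icc_right ht.2
  have hweight : IntervalIntegrable (fun s => 2 * M * (|h s| * δ s)) volume 0 t := by
    have hTu := uIcc_of_le (ht.1.trans ht.2)
    refine ((hh.abs.mul_continuousOn (hTu ▸ hδc)).const_mul _).mono_set ?_
    exact uIcc_subset_uIcc_left (hTu ▸ ht)
  have hdiff : ‖∫ s in (0 : ℝ)..t, (h s * selfAverage (Φ s) u - h s * selfAverage (Ψ s) u)‖ ≤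
      ∫ s in (0 : ℝ)..t, 2 * M * (|h s| * δ s) := by
    refine intervalIntegral.norm_integral_le_of_norm_le ht.1 (.of_forall fun s hs => ?_) hweight
    have hs' : s ∈ Icc 0 T := hsub (Ioc_subset_Icc_self hs)
    rw [← mul_sub, norm_mul, Complex.norm_real, Real.norm_eq_abs, mul_left_comm]
    gcongr
    exact norm_selfAverage_sub_le (hΦ.continuous_right s hs') (hΨ.continuous_right s hs')
      (fun v hv => (hM s hs' v hv).1) (fun v hv => (hM s hs' v hv).2) (hδ s hs') hu
  calc ‖Φ t u - Ψ t u‖ = ‖(u ^ 2 / 2 : ℂ) * ∫ s in (0 : ℝ)..t,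
        (h s * selfAverage (Φ s) u - h s * selfAverage (Ψ s) u)‖ := by
        rw [hΦ.eq_integral t ht, hΨ.eq_integral t ht, hΦΨ, sub_sub_sub_cancel_left, ← mul_sub,
          intervalIntegral.integral_sub (hΦ.intervalIntegrable_mul_selfAverage hh ht u)
            (hΨ.intervalIntegrable_mul_selfAverage hh ht u), norm_mul, norm_mul, norm_sub_rev]
    _ = u ^ 2 / 2 * ‖∫ s in (0 : ℝ)..t,
        (h s * selfAverage (Φ s) u - h s * selfAverage (Ψ s) u)‖ := by
        rw [norm_mul, norm_div, norm_pow, Complex.norm_real, Complex.norm_two, Real.norm_eq_abs,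
          sq_abs]
    _ ≤ U ^ 2 / 2 * ∫ s in (0 : ℝ)..t, 2 * M * (|h s| * δ s) := by
        rw [← sq_abs u]
        gcongr
    _ = ∫ s in (0 : ℝ)..t, U ^ 2 * M * |h s| * δ s := by
        rw [← intervalIntegral.integral_const_mul]
        congr 1 with s
        ring

lemma unique (hΦ : IsCharFlow h T Φ) (hΨ : IsCharFlow h T Ψ)
    (hh : IntervalIntegrable h volume 0 T) (hΦΨ : Φ 0 = Ψ 0) {t : ℝ} (ht : t ∈ Icc 0 T) :
    Φ t = Ψ t := by
  funext u
  obtain ⟨M₁, hM₁⟩ := hΦ.exists_bound |u|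
  obtain ⟨M₂, hM₂⟩ := hΨ.exists_bound |u|
  have hM (s) (hs : s ∈ Icc 0 T) (v) (hv : |v| ≤ |u|) :
      ‖Φ s v‖ ≤ max M₁ M₂ ∧ ‖Ψ s v‖ ≤ max M₁ M₂ :=
    ⟨(hM₁ s hs v hv).trans (le_max_left _ _), (hM₂ s hs v hv).trans (le_max_right _ _)⟩
  have hB (s) (hs : s ∈ Icc 0 T) (v : {v : ℝ // |v| ≤ |u|}) : ‖Φ s v - Ψ s v‖ ≤ M₁ + M₂ :=
    (norm_sub_le _ _).trans (add_le_add (hM₁ s hs v v.2) (hM₂ s hs v v.2))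
  rw [← sub_eq_zero, ← norm_le_zero_iff]
  exact nonpos_of_forall_le_integral (k := fun s => |u| ^ 2 * max M₁ M₂ * |h s|)
    (hh.abs.const_mul _) hB
    (fun δ hδc hδ s hs v =>
      hΦ.norm_sub_le_integral hΨ hh hΦΨ hM hδc (fun r hr w hw => hδ r hr ⟨w, hw⟩) hs v.2)
    ht ⟨u, le_rfl⟩

end IsCharFlow

lemma selfAverage_charSeries (w u : ℝ) :
    selfAverage (fun u => charSeries (w * u ^ 2)) u = (-2 * deriv charSeries (w * u ^ 2) : ℝ) := by
  rw [(hasDerivAt_charSeries _).deriv, selfAverage, ← mul_assoc, show (-2 * -(1 / 2) : ℝ) = 1 by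
    norm_num, one_mul, ← intervalIntegral.integral_ofReal]
  congr 1 with a
  push_cast
  congr 3 <;> ring

lemma integral_deriv_mul_selfAverage_charSeries {g : ℝ → ℝ} {a b : ℝ}
    (hg : AbsolutelyContinuousOnInterval g a b) (c u : ℝ) :
    u ^ 2 / 2 * ∫ s in a..b,
      (deriv g s : ℝ) * selfAverage (fun v => charSeries ((g s - c) * v ^ 2)) u =
      charSeries ((g a - c) * u ^ 2) - charSeries ((g b - c) * u ^ 2) := by
  have hderiv (x : ℝ) : deriv (fun x => charSeries ((x - c) * u ^ 2)) x =
      u ^ 2 * deriv charSeries ((x - c) * u ^ 2) :=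
    HasDerivAt.deriv <| ((hasDerivAt_charSeries _).differentiableAt.hasDerivAt.comp x
      (((hasDerivAt_id' x).sub_const c).mul_const (u ^ 2))).congr_deriv (by ring)
  have hchain := integral_deriv_comp_mul_deriv_eq_sub
    (F := fun x => charSeries ((x - c) * u ^ 2)) (contDiff_charSeries.fun_comp (by fun_prop)) hg
  simp only [hderiv, mul_assoc, intervalIntegral.integral_const_mul] at hchain
  have hdrift (s : ℝ) : deriv g s * selfAverage (fun v => charSeries ((g s - c) * v ^ 2)) u =
      ((-2 * (deriv charSeries ((g s - c) * u ^ 2) * deriv g s) : ℝ) : ℂ) := by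
    rw [selfAverage_charSeries]
    push_cast
    ring
  simp only [hdrift, intervalIntegral.integral_ofReal, intervalIntegral.integral_const_mul]
  have hchain' := congrArg ((↑) : ℝ → ℂ) hchain
  push_cast at hchain' ⊢
  linear_combination -hchain'

lemma isCharFlow_charSeries {g : ℝ → ℝ} {T : ℝ} (hT : 0 ≤ T)
    (hg : AbsolutelyContinuousOnInterval g 0 T) :
    IsCharFlow (deriv g) T fun s u => charSeries ((g s - g 0) * u ^ 2) := by
  have hTu := uIcc_of_le hT
  have hF := contDiff_charSeries.continuous
  have hgc : ContinuousOn g (Icc 0 T) := hTu ▸ hg.continuousOn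
  refine ⟨⟨fun s _ => by fun_prop, fun u => by fun_prop, fun U => ?_⟩, fun t ht u => ?_⟩
  · have hgfst : ContinuousOn (fun p : ℝ × ℝ => g p.1) (Icc 0 T ×ˢ Icc (-U) U) :=
      hgc.comp continuousOn_fst fun p hp => hp.1
    have hFg : ContinuousOn (fun p : ℝ × ℝ => charSeries ((g p.1 - g 0) * p.2 ^ 2))
        (Icc 0 T ×ˢ Icc (-U) U) := hF.comp_continuousOn <|
      (hgfst.sub continuousOn_const).mul (by fun_prop)
    obtain ⟨M, hM⟩ := (isCompact_Icc.prod isCompact_Icc).exists_bound_of_continuousOn hFg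
    refine ⟨M, fun s hs u hu => ?_⟩
    rw [Complex.norm_real]
    exact hM (s, u) ⟨hs, abs_le.mp hu⟩
  · rw [integral_deriv_mul_selfAverage_charSeries (hg.mono (uIcc_subset_uIcc_left (hTu ▸ ht))),
      sub_sub_cancel]

end CharFlow

section Semicircle

lemma hasSum_charFun_of_ae_abs_le {ν : Measure ℝ} [IsFiniteMeasure ν] {b : ℝ}
    (hν : ∀ᵐ x ∂ν, |x| ≤ b) (u : ℝ) :
    HasSum (fun n : ℕ => (u * Complex.I) ^ n / n ! * (∫ x, x ^ n ∂ν : ℝ)) (charFun ν u) := by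
  have hterm (n : ℕ) : (u * Complex.I) ^ n / n ! * (∫ x, x ^ n ∂ν : ℝ) =
      ∫ x : ℝ, (u * x * Complex.I) ^ n / n ! ∂ν := by
    rw [← integral_complex_ofReal, ← integral_const_mul]
    congr 1 with x
    push_cast
    ring
  simp only [charFun_apply_real, hterm]
  refine hasSum_integral_of_dominated_convergence (fun n _ => (|u| * b) ^ n / n !)
    (fun n => Continuous.aestronglyMeasurable (by fun_prop)) (fun n => ?_)
    (.of_forall fun _ => Real.summable_pow_div_factorial _) (integrable_const _)
    (.of_forall fun x => Complex.exp_eq_exp_ℂ ▸ NormedSpace.expSeries_div_hasSum_exp _)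
  filter_upwards [hν] with x hx
  rw [norm_div, norm_pow, norm_mul, norm_mul, Complex.norm_I, mul_one, Complex.norm_real,
    Complex.norm_real, Complex.norm_natCast, Real.norm_eq_abs, Real.norm_eq_abs]
  gcongr

lemma add_two_mul_catalan_succ (n : ℕ) :
    (n + 2) * catalan (n + 1) = 2 * (2 * n + 1) * catalan n := by
  refine Nat.eq_of_mul_eq_mul_left n.succ_pos ?_
  calc (n + 1) * ((n + 2) * catalan (n + 1)) = (n + 1) * (n + 1).centralBinom := by
        rw [← succ_mul_catalan_eq_centralBinom (n + 1)]
    _ = 2 * (2 * n + 1) * ((n + 1) * catalan n) := by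
        rw [Nat.succ_mul_centralBinom_succ, succ_mul_catalan_eq_centralBinom]
    _ = (n + 1) * (2 * (2 * n + 1) * catalan n) := by ring

section Moments

variable {c v : ℝ}

lemma integral_sqrt_sub_sq (hc : 0 ≤ c) :
    ∫ x in (-√c)..√c, √(c - x ^ 2) = c * (Real.pi / 2) := by
  have hscale (x : ℝ) : √(c - (√c * x) ^ 2) = √c * √(1 - x ^ 2) := by
    rw [mul_pow, Real.sq_sqrt hc, ← mul_one_sub, Real.sqrt_mul hc]
  have hsubst := intervalIntegral.mul_integral_comp_mul_left (a := -1) (b := 1)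
    (f := fun x => √(c - x ^ 2)) √c
  simp only [mul_neg, mul_one, hscale] at hsubst
  rw [← hsubst, intervalIntegral.integral_const_mul, integral_sqrt_one_sub_sq, ← mul_assoc,
    Real.mul_self_sqrt hc]

lemma hasDerivAt_pow_mul_sub_sq_mul_sqrt {x : ℝ} (hx : x ^ 2 < c) (k : ℕ) :
    HasDerivAt (fun x => x ^ (2 * k + 1) * (c - x ^ 2) * √(c - x ^ 2))
      (c * (2 * k + 1) * (x ^ (2 * k) * √(c - x ^ 2)) -
        (2 * k + 4) * (x ^ (2 * (k + 1)) * √(c - x ^ 2))) x := by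
  have hpos : 0 < c - x ^ 2 := sub_pos.mpr hx
  have hq : HasDerivAt (fun x : ℝ => c - x ^ 2) (-(2 * x)) x := by
    simpa using (hasDerivAt_pow 2 x).const_sub c
  refine (((hasDerivAt_pow (2 * k + 1) x).fun_mul hq).fun_mul
    (hq.sqrt hpos.ne')).congr_deriv ?_
  have hs : √(c - x ^ 2) ≠ 0 := (Real.sqrt_pos.mpr hpos).ne'
  have hs₂ := Real.sq_sqrt hpos.le
  generalize √(c - x ^ 2) = r at hs hs₂ ⊢
  obtain rfl : c = r ^ 2 + x ^ 2 := by rw [hs₂, sub_add_cancel]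
  push_cast
  field_simp
  ring

lemma integral_pow_succ_mul_sqrt (hc : 0 ≤ c) (k : ℕ) :
    (2 * k + 4) * ∫ x in (-√c)..√c, x ^ (2 * (k + 1)) * √(c - x ^ 2) =
      c * (2 * k + 1) * ∫ x in (-√c)..√c, x ^ (2 * k) * √(c - x ^ 2) := by
  have hparts := intervalIntegral.integral_eq_sub_of_hasDerivAt_of_le
    (neg_le_self (Real.sqrt_nonneg c)) (Continuous.continuousOn (by fun_prop))
    (fun x hx => hasDerivAt_pow_mul_sub_sq_mul_sqrt (Real.sq_lt.mpr hx) k)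
    (Continuous.intervalIntegrable (by fun_prop) _ _)
  rw [intervalIntegral.integral_sub (Continuous.intervalIntegrable (by fun_prop) _ _)
    (Continuous.intervalIntegrable (by fun_prop) _ _), intervalIntegral.integral_const_mul,
    intervalIntegral.integral_const_mul, neg_sq, Real.sq_sqrt hc, sub_self, mul_zero, mul_zero,
    zero_mul, sub_zero] at hparts
  exact (sub_eq_zero.mp hparts).symm

lemma integral_pow_two_mul_mul_sqrt (hv : 0 ≤ v) (k : ℕ) :
    ∫ x in (-√(4 * v))..√(4 * v), x ^ (2 * k) * √(4 * v - x ^ 2) =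
      2 * Real.pi * v * (v ^ k * catalan k) := by
  have hv₄ : 0 ≤ 4 * v := by positivity
  induction k with
  | zero =>
    simp only [mul_zero, pow_zero, one_mul, catalan_zero, Nat.cast_one]
    rw [integral_sqrt_sub_sq hv₄]
    ring
  | succ k ih =>
    have hstep := integral_pow_succ_mul_sqrt hv₄ k
    have hcat : (k + 2 : ℝ) * catalan (k + 1) = 2 * (2 * k + 1) * catalan k := by
      exact_mod_cast add_two_mul_catalan_succ k
    rw [ih] at hstep
    have hk : (2 * k + 4 : ℝ) ≠ 0 := by positivity
    refine mul_left_cancel₀ hk (hstep.trans ?_)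
    linear_combination (-4 * Real.pi * v * v ^ k * v) * hcat

lemma sqrt_sub_sq_eq_zero {x : ℝ} (hx : x ∉ Ioo (-√c) √c) : √(c - x ^ 2) = 0 :=
  Real.sqrt_eq_zero_of_nonpos (by simpa using mt Real.sq_lt.mp hx)

lemma integral_semicircle (hv : 0 ≤ v) (f : ℝ → ℝ) :
    ∫ x, f x ∂semicircle v =
      (2 * Real.pi * v)⁻¹ * ∫ x in (-√(4 * v))..√(4 * v), f x * √(4 * v - x ^ 2) := by
  have hb : -√(4 * v) ≤ √(4 * v) := neg_le_self (Real.sqrt_nonneg _)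
  have hnonneg (x : ℝ) : 0 ≤ (2 * Real.pi * v)⁻¹ * √(4 * v - x ^ 2) := by positivity
  have hzero (x : ℝ) (hx : x ∉ Ioc (-√(4 * v)) √(4 * v)) : f x * √(4 * v - x ^ 2) = 0 := by
    rw [sqrt_sub_sq_eq_zero fun h => hx (Ioo_subset_Ioc_self h), mul_zero]
  rw [semicircle, integral_withDensity_eq_integral_toReal_smul (by fun_prop)
    (.of_forall fun _ => ENNReal.ofReal_lt_top), intervalIntegral.integral_of_le hb,
    setIntegral_eq_integral_of_forall_compl_eq_zero hzero, ← integral_const_mul]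
  congr 1 with x
  rw [ENNReal.toReal_ofReal (hnonneg x), smul_eq_mul]
  ring

lemma integral_pow_two_mul_semicircle (hv : 0 < v) (k : ℕ) :
    ∫ x, x ^ (2 * k) ∂semicircle v = v ^ k * catalan k := by
  rw [integral_semicircle hv.le, integral_pow_two_mul_mul_sqrt hv.le]
  exact inv_mul_cancel_left₀ (by positivity) _

lemma integral_pow_two_mul_add_one_semicircle (hv : 0 ≤ v) (k : ℕ) :
    ∫ x, x ^ (2 * k + 1) ∂semicircle v = 0 := by
  have hodd := intervalIntegral.integral_comp_neg (a := -√(4 * v)) (b := √(4 * v))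
    (fun x => x ^ (2 * k + 1) * √(4 * v - x ^ 2))
  simp only [(odd_two_mul_add_one k).neg_pow, neg_sq, neg_mul, neg_neg,
    intervalIntegral.integral_neg] at hodd
  rw [integral_semicircle hv, self_eq_neg.mp hodd.symm, mul_zero]

lemma isFiniteMeasure_semicircle (v : ℝ) : IsFiniteMeasure (semicircle v) := by
  refine isFiniteMeasure_withDensity_ofReal (Continuous.integrable_of_hasCompactSupport
    (by fun_prop) (.intro (isCompact_Icc (a := -√(4 * v)) (b := √(4 * v))) fun x hx => ?_)).2
  rw [sqrt_sub_sq_eq_zero fun h => hx (Ioo_subset_Icc_self h), mul_zero]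

lemma ae_abs_le_semicircle (v : ℝ) : ∀ᵐ x ∂semicircle v, |x| ≤ √(4 * v) := by
  rw [semicircle, ae_withDensity_iff (by fun_prop)]
  refine .of_forall fun x hx => ?_
  by_contra hcon
  refine hx ?_
  rw [sqrt_sub_sq_eq_zero fun h => hcon (abs_le.mpr ⟨h.1.le, h.2.le⟩), mul_zero,
    ENNReal.ofReal_zero]

lemma charFun_semicircle (hv : 0 < v) (u : ℝ) :
    charFun (semicircle v) u = charSeries (v * u ^ 2) := by
  have := isFiniteMeasure_semicircle v
  have hodd : ∀ n ∉ range (fun k : ℕ => 2 * k),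
      (u * Complex.I) ^ n / n ! * (∫ x, x ^ n ∂semicircle v : ℝ) = 0 := by
    intro n hn
    obtain ⟨k, rfl | rfl⟩ := n.even_or_odd'
    · exact absurd (mem_range_self k) hn
    · rw [integral_pow_two_mul_add_one_semicircle hv.le, Complex.ofReal_zero, mul_zero]
  have hsum := ((mul_right_injective₀ two_ne_zero).hasSum_iff hodd).mpr
    (hasSum_charFun_of_ae_abs_le (ae_abs_le_semicircle v) u)
  refine hsum.unique ?_
  convert Complex.hasSum_ofReal.mpr (hasSum_charSeries (v * u ^ 2)) using 2 with k
  rw [Function.comp_apply, integral_pow_two_mul_semicircle hv, charCoeff, mul_pow,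
    pow_mul Complex.I, Complex.I_sq]
  push_cast
  ring

end Moments

end Semicircle

section MeasureFlow

lemma diffQuot_eq_integral {f : ℝ → ℝ} (hf : ContDiff ℝ 2 f) (x y : ℝ) :
    diffQuot f x y = ∫ a in (0 : ℝ)..1, deriv (deriv f) (a * x + (1 - a) * y) := by
  have hf₁ : ContDiff ℝ 1 (deriv f) := hf.deriv'
  have := hf₁.continuous_deriv_one
  by_cases hxy : x = y
  · subst hxy
    simp [diffQuot, ← add_mul]
  · have hne : x - y ≠ 0 := sub_ne_zero.mpr hxy
    have hderiv (a : ℝ) : HasDerivAt (fun a => deriv f (a * x + (1 - a) * y) / (x - y))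
        (deriv (deriv f) (a * x + (1 - a) * y)) a := by
      have hline : HasDerivAt (fun a : ℝ => a * x + (1 - a) * y) (x - y) a :=
        (((hasDerivAt_id' a).mul_const x).fun_add
          (((hasDerivAt_id' a).const_sub 1).mul_const y)).congr_deriv (by ring)
      refine (((hf₁.differentiable one_ne_zero _).hasDerivAt.comp a hline).div_const
        (x - y)).congr_deriv ?_
      field_simp
    rw [diffQuot, if_neg hxy, intervalIntegral.integral_eq_sub_of_hasDerivAt
      (fun a _ => hderiv a) (Continuous.intervalIntegrable (by fun_prop) _ _), ← sub_div]
    simp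

lemma integral_integral_diffQuot (ν : Measure ℝ) [IsFiniteMeasure ν] {f : ℝ → ℝ} {C : ℝ}
    (hf : ContDiff ℝ 2 f) (hC : ∀ x, |deriv (deriv f) x| ≤ C) :
    ∫ x, ∫ y, diffQuot f x y ∂ν ∂ν =
      ∫ a in (0 : ℝ)..1, ∫ p, deriv (deriv f) (a * p.1 + (1 - a) * p.2) ∂(ν.prod ν) := by
  have : IsFiniteMeasure (volume.restrict (uIoc (0 : ℝ) 1)) := by
    rw [uIoc_of_le zero_le_one]
    infer_instance
  have : Continuous (deriv (deriv f)) := hf.deriv'.continuous_deriv_one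
  have hint : Integrable
      (Function.uncurry fun (a : ℝ) (p : ℝ × ℝ) => deriv (deriv f) (a * p.1 + (1 - a) * p.2))
      ((volume.restrict (uIoc (0 : ℝ) 1)).prod (ν.prod ν)) :=
    .of_bound (Continuous.aestronglyMeasurable (by fun_prop)) C (.of_forall fun p => hC _)
  simp only [diffQuot_eq_integral hf]
  rw [intervalIntegral_integral_swap hint, integral_prod]
  simpa only [intervalIntegral.integral_of_le, zero_le_one, uIoc_of_le, Function.uncurry]
    using hint.integral_prod_right

/-- The test function `x ↦ Re (c exp(i u x))`: with `c = 1` and `c = -i` it detects the real and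
the imaginary part of a characteristic function. -/
noncomputable def expRe (c : ℂ) (u x : ℝ) : ℝ := (c * Complex.exp (u * x * Complex.I)).re

lemma contDiff_expRe (c : ℂ) (u : ℝ) {n : WithTop ℕ∞} : ContDiff ℝ n (expRe c u) := by
  have hexp : ContDiff ℝ n fun x : ℝ => c * Complex.exp (u * x * Complex.I) :=
    contDiff_const.mul
      ((contDiff_const.mul Complex.ofRealCLM.contDiff).mul contDiff_const).cexp
  exact Complex.reCLM.contDiff.comp hexp

lemma abs_expRe_le (c : ℂ) (u x : ℝ) : |expRe c u x| ≤ ‖c‖ := by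
  refine (Complex.abs_re_le_norm _).trans_eq ?_
  rw [norm_mul, ← Complex.ofReal_mul, Complex.norm_exp_ofReal_mul_I, mul_one]

lemma deriv_expRe (c : ℂ) (u : ℝ) : deriv (expRe c u) = expRe (c * (u * Complex.I)) u := by
  funext x
  have hexp : HasDerivAt (fun z : ℂ => c * Complex.exp (u * z * Complex.I))
      (c * (u * Complex.I) * Complex.exp (u * x * Complex.I)) x :=
    ((((hasDerivAt_id' (x : ℂ)).const_mul (u : ℂ)).mul_const Complex.I).cexp.const_mul
      c).congr_deriv (by ring)
  exact hexp.real_of_complex.deriv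

lemma iteratedDeriv_expRe (k : ℕ) (c : ℂ) (u : ℝ) :
    iteratedDeriv k (expRe c u) = expRe (c * (u * Complex.I) ^ k) u := by
  induction k with
  | zero => simp
  | succ k ih => rw [iteratedDeriv_succ, ih, deriv_expRe, pow_succ, mul_assoc]

lemma isCb3_expRe (c : ℂ) (u : ℝ) : IsCb3 (expRe c u) :=
  ⟨contDiff_expRe c u, fun k _ => ⟨_, fun x => iteratedDeriv_expRe k c u ▸ abs_expRe_le _ u x⟩⟩

lemma integrable_const_mul_cexp (ν : Measure ℝ) [IsFiniteMeasure ν] (c : ℂ) (u : ℝ) :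
    Integrable (fun x : ℝ => c * Complex.exp (u * x * Complex.I)) ν :=
  .of_bound (Continuous.aestronglyMeasurable (by fun_prop)) ‖c‖ <| .of_forall fun x => by
    rw [norm_mul, ← Complex.ofReal_mul, Complex.norm_exp_ofReal_mul_I, mul_one]

lemma integral_expRe (ν : Measure ℝ) [IsFiniteMeasure ν] (c : ℂ) (u : ℝ) :
    ∫ x, expRe c u x ∂ν = (c * charFun ν u).re := by
  rw [charFun_apply_real, ← integral_const_mul]
  exact Complex.reCLM.integral_comp_comm (integrable_const_mul_cexp ν c u)

lemma integral_prod_expRe (ν : Measure ℝ) [IsFiniteMeasure ν] (c : ℂ) (u a b : ℝ) :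
    ∫ p, expRe c u (a * p.1 + b * p.2) ∂(ν.prod ν) =
      (c * (charFun ν (a * u) * charFun ν (b * u))).re := by
  let e (c : ℂ) (v x : ℝ) : ℂ := c * Complex.exp (v * x * Complex.I)
  have he (c : ℂ) (v : ℝ) : ∫ x, e c v x ∂ν = c * charFun ν v := by
    rw [charFun_apply_real, ← integral_const_mul]
  have hsplit (p : ℝ × ℝ) :
      expRe c u (a * p.1 + b * p.2) = (e c (a * u) p.1 * e 1 (b * u) p.2).re := by
    simp only [e]
    rw [expRe, one_mul, mul_assoc c, ← Complex.exp_add]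
    push_cast
    ring_nf
  have hint : Integrable (fun p : ℝ × ℝ => e c (a * u) p.1 * e 1 (b * u) p.2) (ν.prod ν) :=
    (integrable_const_mul_cexp ν c (a * u)).mul_prod (integrable_const_mul_cexp ν 1 (b * u))
  calc ∫ p, expRe c u (a * p.1 + b * p.2) ∂(ν.prod ν) =
        (∫ p, e c (a * u) p.1 * e 1 (b * u) p.2 ∂(ν.prod ν)).re := by
        simp only [hsplit]
        exact Complex.reCLM.integral_comp_comm hint
    _ = (c * (charFun ν (a * u) * charFun ν (b * u))).re := by
        rw [integral_prod_mul (e c (a * u)), he, he, one_mul, mul_assoc]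

lemma integral_integral_diffQuot_expRe (ν : Measure ℝ) [IsFiniteMeasure ν] (c : ℂ) (u : ℝ) :
    ∫ x, ∫ y, diffQuot (expRe c u) x y ∂ν ∂ν =
      -u ^ 2 * (c * selfAverage (charFun ν) u).re := by
  have := continuous_charFun (μ := ν)
  have hderiv : deriv (deriv (expRe c u)) = expRe ((-u ^ 2 : ℝ) * c) u := by
    rw [deriv_expRe, deriv_expRe]
    congr 1
    push_cast
    linear_combination c * u ^ 2 * Complex.I_sq
  rw [integral_integral_diffQuot ν (contDiff_expRe c u) fun x => hderiv ▸ abs_expRe_le _ u x,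
    ← Complex.re_ofReal_mul, ← mul_assoc, selfAverage, ← intervalIntegral.integral_const_mul]
  simp only [hderiv, integral_prod_expRe]
  have hint : IntervalIntegrable (fun a => (-u ^ 2 : ℝ) * c *
      (charFun ν (a * u) * charFun ν ((1 - a) * u))) volume 0 1 :=
    Continuous.intervalIntegrable (by fun_prop) _ _
  exact Complex.reCLM.intervalIntegral_comp_comm hint

lemma continuousOn_charFun {ι : Type*} [TopologicalSpace ι] {μ : ι → ProbabilityMeasure ℝ}
    {s : Set ι} (hμ : ContinuousOn μ s) (u : ℝ) :
    ContinuousOn (fun t => charFun (μ t : Measure ℝ) u) s := fun t ht => by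
  simpa only [ContinuousWithinAt, charFun_eq_integral_innerProbChar] using
    (ProbabilityMeasure.tendsto_iff_forall_integral_rclike_tendsto ℂ).mp (hμ t ht)
      (BoundedContinuousFunction.innerProbChar u)

lemma re_mul_charFun_of_solvesFlow {R : ℝ → ℝ → ℝ} {μ : ℝ → ProbabilityMeasure ℝ}
    (hμ : SolvesFlow R μ) {t u : ℝ} (ht : 0 ≤ t)
    (hint : IntervalIntegrable (fun s => (deriv (fun r => R r r) s : ℝ) *
      selfAverage (charFun (μ s : Measure ℝ)) u) volume 0 t) (c : ℂ) :
    (c * charFun (μ t : Measure ℝ) u).re = (c * (charFun (μ 0 : Measure ℝ) u -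
      u ^ 2 / 2 * ∫ s in (0 : ℝ)..t, (deriv (fun r => R r r) s : ℝ) *
        selfAverage (charFun (μ s : Measure ℝ)) u)).re := by
  have hre : ∫ s in (0 : ℝ)..t, deriv (fun r => R r r) s *
      (c * selfAverage (charFun (μ s : Measure ℝ)) u).re =
      (c * ∫ s in (0 : ℝ)..t, (deriv (fun r => R r r) s : ℝ) *
        selfAverage (charFun (μ s : Measure ℝ)) u).re := by
    rw [← intervalIntegral.integral_const_mul]
    simpa only [Complex.reCLM_apply, mul_left_comm c, Complex.re_ofReal_mul] using
      Complex.reCLM.intervalIntegral_comp_comm (hint.const_mul c)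
  have hflow := hμ t ht _ (isCb3_expRe c u)
  simp only [integral_expRe, integral_integral_diffQuot_expRe, mul_left_comm _ (-u ^ 2),
    intervalIntegral.integral_const_mul, hre] at hflow
  rw [hflow, mul_sub, Complex.sub_re, mul_left_comm c,
    show (u ^ 2 / 2 : ℂ) = (u ^ 2 / 2 : ℝ) by push_cast; rfl, Complex.re_ofReal_mul]
  ring

lemma isRegularFamily_charFun {μ : ℝ → ProbabilityMeasure ℝ} {T : ℝ}
    (hμ : ContinuousOn μ (Icc 0 T)) :
    IsRegularFamily T fun s => charFun (μ s : Measure ℝ) where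
  continuous_right _ _ := continuous_charFun
  continuousOn_left := continuousOn_charFun hμ
  exists_bound _ := ⟨1, fun _ _ _ _ => norm_charFun_le_one _⟩

lemma isCharFlow_charFun {R : ℝ → ℝ → ℝ} {μ : ℝ → ProbabilityMeasure ℝ} {T : ℝ}
    (hμc : ContinuousOn μ (Icc 0 T)) (hμ : SolvesFlow R μ)
    (hint : IntervalIntegrable (deriv fun s => R s s) volume 0 T) :
    IsCharFlow (deriv fun s => R s s) T fun s => charFun (μ s : Measure ℝ) where
  toIsRegularFamily := isRegularFamily_charFun hμc
  eq_integral t ht u := by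
    have hre := re_mul_charFun_of_solvesFlow hμ ht.1
      ((isRegularFamily_charFun hμc).intervalIntegrable_mul_selfAverage hint ht u)
    refine Complex.ext (by simpa only [one_mul] using hre 1) ?_
    simpa only [neg_mul, Complex.neg_re, Complex.I_mul_re, neg_neg] using hre (-Complex.I)

lemma charFun_eq_charSeries_of_solvesFlow {R : ℝ → ℝ → ℝ} {μ : ℝ → ProbabilityMeasure ℝ} {T : ℝ}
    (hT : 0 ≤ T) (hR : AbsolutelyContinuousOnInterval (fun s => R s s) 0 T)
    (hμc : ContinuousOn μ (Icc 0 T)) (hμ : SolvesFlow R μ)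
    (h0 : (μ 0 : Measure ℝ) = Measure.dirac 0) :
    charFun (μ T : Measure ℝ) = fun u => (charSeries ((R T T - R 0 0) * u ^ 2) : ℂ) := by
  have hint := hR.intervalIntegrable_deriv
  refine (isCharFlow_charFun hμc hμ hint).unique (isCharFlow_charSeries hT hR) hint ?_ ⟨hT, le_rfl⟩
  funext u
  simp [h0, charSeries_zero]

end MeasureFlow

lemma absolutelyContinuousOnInterval_of_condH1 {R : ℝ → ℝ → ℝ} (hR : CondH1 R) {T : ℝ}
    (hT : 0 < T) : AbsolutelyContinuousOnInterval (fun s => R s s) 0 T := by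
  obtain ⟨hC1, hcont₀, hzeros, -⟩ := hR
  have hcont : ContinuousOn (fun s => R s s) (Icc 0 T) := fun s hs => by
    rcases hs.1.eq_or_lt with rfl | hs
    · exact hcont₀.mono Icc_subset_Ici_self
    · exact (hC1.continuousOn.continuousAt (Ioi_mem_nhds hs)).continuousWithinAt
  have hg' := hC1.continuousOn_deriv_of_isOpen isOpen_Ioi le_rfl
  exact absolutelyContinuousOnInterval_of_intervalIntegrable_deriv hT.le hcont
    ((hC1.differentiableOn one_ne_zero).mono Ioo_subset_Ioi_self)
    (intervalIntegrable_deriv_of_finite_zeros hcont (hg'.mono Ioc_subset_Ioi_self) hT (hzeros T hT))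

end SemicircleFlow

theorem flow_from_dirac_is_semicircle_general (R : ℝ → ℝ → ℝ)
    (hR : ∀ T > 0, AbsolutelyContinuousOnInterval (fun s => R s s) 0 T)
    (μ : ℝ → ProbabilityMeasure ℝ) (hμc : ContinuousOn μ (Ici 0)) (hμ : SolvesFlow R μ)
    (h0 : (μ 0 : Measure ℝ) = Measure.dirac 0) :
    ∀ t ≥ 0, R 0 0 < R t t → (μ t : Measure ℝ) = semicircle (R t t - R 0 0) := by
  intro t ht hRt
  have htpos : 0 < t := ht.lt_of_ne' fun h => hRt.ne (h ▸ rfl)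
  have hv : 0 < R t t - R 0 0 := sub_pos.mpr hRt
  have := SemicircleFlow.isFiniteMeasure_semicircle (R t t - R 0 0)
  refine Measure.ext_of_charFun ?_
  rw [SemicircleFlow.charFun_eq_charSeries_of_solvesFlow ht (hR t htpos)
    (hμc.mono Icc_subset_Ici_self) hμ h0]
  exact funext fun u => (SemicircleFlow.charFun_semicircle hv u).symm

/-- **Semicircle solution of the measure flow.** If `R` satisfies (H1) with `R(0,0) = 0` and
`(μ_t)` is a weakly continuous solution of the measure-flow equation for `R` started from the
Dirac mass at `0`, then for every `t ≥ 0` with `R(t,t) > 0` the measure `μ_t` is the semicircle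
distribution with variance `R(t,t)`. -/
theorem flow_from_dirac_is_semicircle
    (R : ℝ → ℝ → ℝ) (hR : CondH1 R) (hR0 : R 0 0 = 0)
    (μ : ℝ → ProbabilityMeasure ℝ)
    (hμc : ContinuousOn μ (Set.Ici 0))
    (hμ : SolvesFlow R μ)
    (h0 : (μ 0 : Measure ℝ) = Measure.dirac 0) :
    ∀ t ≥ (0 : ℝ), 0 < R t t → (μ t : Measure ℝ) = semicircle (R t t) := by
  simpa only [hR0, sub_zero] using flow_from_dirac_is_semicircle_general R
    (fun _ => SemicircleFlow.absolutelyContinuousOnInterval_of_condH1 hR) μ hμc hμ h0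
end

section
/- For τ > 0 and z in the upper half-plane ℂ₊ define F_τ(z) := ((z−2√τ)^{1/2}(z+2√τ)^{1/2} − z)/(2τ), where w^{1/2} denotes the principal complex square root. Then: (i) for each fixed τ > 0, z ↦ F_τ(z) is complex differentiable at every z ∈ ℂ₊; (ii) for each fixed z ∈ ℂ₊, τ ↦ F_τ(z) is differentiable on (0,∞) and satisfies the Burgers equation ∂F_τ(z)/∂τ = F_τ(z) · ∂F_τ(z)/∂z; (iii) F_τ(z) → −1/z as τ → 0⁺, i.e. F satisfies the initial condition corresponding to the Dirac mass at 0. -/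
open Complex Filter

/-- `F_τ(z) = ((z−2√τ)^{1/2}(z+2√τ)^{1/2} − z)/(2τ)`, with principal complex square roots. -/
noncomputable def burgersF (τ : ℝ) (z : ℂ) : ℂ :=
  ((z - 2 * (Real.sqrt τ : ℂ)) ^ ((1 : ℂ) / 2) * (z + 2 * (Real.sqrt τ : ℂ)) ^ ((1 : ℂ) / 2)
      - z) / (2 * (τ : ℂ))

/-!
Let `S = (z - 2√τ)^{1/2} (z + 2√τ)^{1/2}`, so that `S² = z² - 4τ`. Since `S` is continuous and
nonzero, differentiating this identity gives `∂S/∂z = z / S` and `∂S/∂τ = -2 / S`. For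
`F = (S - z) / (2τ)` this means `∂F/∂z = -F / S` and `∂F/∂τ = -F² / S`, whence the Burgers equation.
Rationalizing, `F = -2 / (S + z)`, which tends to `-1/z` because `S → z` as `τ → 0⁺`.
-/

open scoped Topology

theorem hasDerivAt_of_sq_eventuallyEq {𝕜 𝕜' : Type*} [NontriviallyNormedField 𝕜]
    [NontriviallyNormedField 𝕜'] [NormedAlgebra 𝕜 𝕜'] [NeZero (2 : 𝕜')]
    {f g : 𝕜 → 𝕜'} {f' : 𝕜'} {x : 𝕜} (hf : HasDerivAt f f' x) (hg : ContinuousAt g x)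
    (hgx : g x ≠ 0) (hsq : (fun y => g y ^ 2) =ᶠ[𝓝 x] f) :
    HasDerivAt g (f' / (2 * g x)) x := by
  have hsum : Tendsto (fun y => g y + g x) (𝓝 x) (𝓝 (2 * g x)) := by
    simpa only [two_mul] using hg.tendsto.add_const (g x)
  have hsum_ne : ∀ᶠ y in 𝓝 x, g y + g x ≠ 0 :=
    hsum.eventually_ne (mul_ne_zero two_ne_zero hgx)
  have hslope : (fun y => slope f x y / (g y + g x)) =ᶠ[𝓝 x] slope g x := by
    filter_upwards [hsq, hsum_ne] with y hy hy_ne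
    rw [div_eq_iff hy_ne, slope_def_module, slope_def_module, ← hy, ← hsq.self_of_nhds,
      smul_mul_assoc, sq_sub_sq, mul_comm]
  rw [hasDerivAt_iff_tendsto_slope] at hf ⊢
  exact (hf.div (hsum.mono_left nhdsWithin_le_nhds) (mul_ne_zero two_ne_zero hgx)).congr'
    (hslope.filter_mono nhdsWithin_le_nhds)

theorem add_ofReal_mem_slitPlane {w : ℂ} (hw : w ∈ slitPlane) {r : ℝ} (hr : 0 ≤ r) :
    w + r ∈ slitPlane := by
  rw [mem_slitPlane_iff] at hw ⊢
  simpa using hw.imp_left fun hre => add_pos_of_pos_of_nonneg hre hr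

theorem sub_two_mul_ofReal_mem_slitPlane {z : ℂ} (hz : z.im ≠ 0) (s : ℝ) :
    z - 2 * (s : ℂ) ∈ slitPlane :=
  mem_slitPlane_iff.2 (.inr (by simpa using hz))

/-- The branch `(z - 2√τ)^{1/2} (z + 2√τ)^{1/2}` of the square root of `z² - 4τ`, in the form in
which it enters `burgersF`. -/
noncomputable def burgersRoot (τ : ℝ) (z : ℂ) : ℂ :=
  (z - 2 * (√τ : ℂ)) ^ ((1 : ℂ) / 2) * (z + 2 * (√τ : ℂ)) ^ ((1 : ℂ) / 2)

theorem burgersF_eq (τ : ℝ) (z : ℂ) : burgersF τ z = (burgersRoot τ z - z) / (2 * τ) :=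
  rfl

theorem burgersRoot_sq {τ : ℝ} (hτ : 0 ≤ τ) (z : ℂ) : burgersRoot τ z ^ 2 = z ^ 2 - 4 * τ := by
  have hs : (√τ : ℂ) ^ 2 = τ := by rw [← ofReal_pow, Real.sq_sqrt hτ]
  have hroot (w : ℂ) : (w ^ ((1 : ℂ) / 2)) ^ 2 = w := by simp
  rw [burgersRoot, mul_pow, hroot, hroot]
  linear_combination -4 * hs

theorem burgersRoot_zero_left (z : ℂ) : burgersRoot 0 z = z := by
  simp [burgersRoot, ← sq]

section SlitPlane

variable {τ : ℝ} {z : ℂ} (hz : z - 2 * (√τ : ℂ) ∈ slitPlane)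
include hz

theorem add_two_mul_sqrt_mem_slitPlane : z + 2 * (√τ : ℂ) ∈ slitPlane := by
  have h := add_ofReal_mem_slitPlane hz (r := 4 * √τ) (by positivity)
  convert h using 1
  push_cast
  ring

theorem burgersRoot_ne_zero : burgersRoot τ z ≠ 0 := by
  have hminus := slitPlane_ne_zero hz
  have hplus := slitPlane_ne_zero (add_two_mul_sqrt_mem_slitPlane hz)
  simp [burgersRoot, hminus, hplus]

theorem continuousAt_burgersRoot : ContinuousAt (fun p : ℝ × ℂ => burgersRoot p.1 p.2) (τ, z) := by
  have hminus : ContinuousAt (fun p : ℝ × ℂ => p.2 - 2 * (√p.1 : ℂ)) (τ, z) := by fun_prop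
  have hplus : ContinuousAt (fun p : ℝ × ℂ => p.2 + 2 * (√p.1 : ℂ)) (τ, z) := by fun_prop
  exact (hminus.cpow continuousAt_const hz).mul
    (hplus.cpow continuousAt_const (add_two_mul_sqrt_mem_slitPlane hz))

theorem continuousAt_burgersRoot_time : ContinuousAt (fun σ => burgersRoot σ z) τ :=
  (continuousAt_burgersRoot hz).comp (f := fun σ : ℝ => (σ, z)) (by fun_prop)

theorem hasDerivAt_burgersRoot (hτ : 0 ≤ τ) :
    HasDerivAt (burgersRoot τ) (z / burgersRoot τ z) z := by
  have hcont : ContinuousAt (burgersRoot τ) z :=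
    (continuousAt_burgersRoot hz).comp (f := fun w : ℂ => (τ, w)) (by fun_prop)
  have hsq : HasDerivAt (fun w : ℂ => w ^ 2 - 4 * τ) (2 * z) z := by
    simpa using (hasDerivAt_pow 2 z).sub_const (4 * (τ : ℂ))
  exact (hasDerivAt_of_sq_eventuallyEq hsq hcont (burgersRoot_ne_zero hz)
    (.of_forall (burgersRoot_sq hτ))).congr_deriv (mul_div_mul_left _ _ two_ne_zero)

theorem hasDerivAt_burgersRoot_time (hτ : 0 < τ) :
    HasDerivAt (fun σ => burgersRoot σ z) (-2 / burgersRoot τ z) τ := by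
  have hsq : HasDerivAt (fun σ : ℝ => z ^ 2 - 4 * (σ : ℂ)) (-4) τ := by
    simpa using ((hasDerivAt_id τ).ofReal_comp.const_mul 4).const_sub (z ^ 2)
  have hroot : (fun σ => burgersRoot σ z ^ 2) =ᶠ[𝓝 τ] fun σ => z ^ 2 - 4 * (σ : ℂ) := by
    filter_upwards [lt_mem_nhds hτ] with σ hσ using burgersRoot_sq hσ.le z
  refine (hasDerivAt_of_sq_eventuallyEq hsq (continuousAt_burgersRoot_time hz)
    (burgersRoot_ne_zero hz) hroot).congr_deriv ?_
  rw [show (-4 : ℂ) = 2 * -2 by norm_num, mul_div_mul_left _ _ two_ne_zero]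

theorem hasDerivAt_burgersF (hτ : 0 ≤ τ) :
    HasDerivAt (burgersF τ) (-burgersF τ z / burgersRoot τ z) z := by
  have hroot := burgersRoot_ne_zero hz
  refine (((hasDerivAt_burgersRoot hz hτ).sub (hasDerivAt_id z)).div_const
    (2 * (τ : ℂ))).congr_deriv ?_
  rw [burgersF_eq]
  field_simp
  ring

theorem hasDerivAt_burgersF_time (hτ : 0 < τ) :
    HasDerivAt (fun σ => burgersF σ z) (-burgersF τ z ^ 2 / burgersRoot τ z) τ := by
  have hτ₀ : (τ : ℂ) ≠ 0 := ofReal_ne_zero.2 hτ.ne'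
  have hroot := burgersRoot_ne_zero hz
  have hden : HasDerivAt (fun σ : ℝ => 2 * (σ : ℂ)) 2 τ := by
    simpa using (hasDerivAt_id τ).ofReal_comp.const_mul (2 : ℂ)
  refine (((hasDerivAt_burgersRoot_time hz hτ).sub_const z).div hden
    (mul_ne_zero two_ne_zero hτ₀)).congr_deriv ?_
  rw [burgersF_eq]
  field_simp
  linear_combination -burgersRoot_sq hτ.le z

end SlitPlane

theorem burgersF_eq_neg_two_div {τ : ℝ} (hτ : 0 < τ) (z : ℂ) :
    burgersF τ z = -2 / (burgersRoot τ z + z) := by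
  have hτ₀ : (τ : ℂ) ≠ 0 := ofReal_ne_zero.2 hτ.ne'
  have hprod : (burgersRoot τ z - z) * (burgersRoot τ z + z) = -4 * τ := by
    linear_combination burgersRoot_sq hτ.le z
  have hsum : burgersRoot τ z + z ≠ 0 :=
    right_ne_zero_of_mul (hprod ▸ mul_ne_zero (by norm_num) hτ₀)
  rw [burgersF_eq, div_eq_div_iff (mul_ne_zero two_ne_zero hτ₀) hsum, hprod]
  ring

theorem tendsto_burgersF_nhdsGT_zero {z : ℂ} (hz : z ∈ slitPlane) :
    Tendsto (fun τ => burgersF τ z) (𝓝[>] 0) (𝓝 (-z⁻¹)) := by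
  have hz₀ : z + z ≠ 0 := by simpa [← two_mul] using slitPlane_ne_zero hz
  have hroot : Tendsto (fun τ => burgersRoot τ z) (𝓝[>] 0) (𝓝 z) := by
    have hcont := continuousAt_burgersRoot_time (τ := 0) (z := z) (by simpa using hz)
    simpa only [burgersRoot_zero_left] using hcont.tendsto.mono_left nhdsWithin_le_nhds
  have hlim : -2 / (z + z) = -z⁻¹ := by
    rw [← two_mul, neg_div, div_mul_cancel_left₀ two_ne_zero]
  rw [← hlim]
  refine (tendsto_const_nhds.div (hroot.add_const z) hz₀).congr' ?_
  filter_upwards [self_mem_nhdsWithin] with τ hτ using (burgersF_eq_neg_two_div hτ z).symm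

theorem burgersF_solves_burgers_general :
    (∀ τ : ℝ, 0 < τ → ∀ z : ℂ, z - 2 * (√τ : ℂ) ∈ slitPlane →
      DifferentiableAt ℂ (burgersF τ) z) ∧
    (∀ z : ℂ, ∀ τ : ℝ, 0 < τ → z - 2 * (√τ : ℂ) ∈ slitPlane →
      HasDerivAt (fun σ : ℝ => burgersF σ z) (burgersF τ z * deriv (burgersF τ) z) τ) ∧
    (∀ z ∈ slitPlane, Tendsto (fun τ => burgersF τ z) (𝓝[>] 0) (𝓝 (-z⁻¹))) := by
  refine ⟨fun τ hτ z hz => (hasDerivAt_burgersF hz hτ.le).differentiableAt, fun z τ hτ hz => ?_,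
    fun z hz => tendsto_burgersF_nhdsGT_zero hz⟩
  refine (hasDerivAt_burgersF_time hz hτ).congr_deriv ?_
  rw [(hasDerivAt_burgersF hz hτ.le).deriv]
  ring

/-- The function `F_τ(z)` is analytic in `z` on the upper half-plane for each `τ > 0`,
solves the Burgers equation `∂F/∂τ = F · ∂F/∂z` there, and satisfies the initial condition
`F_τ(z) → −1/z` as `τ → 0⁺` corresponding to the Dirac mass at `0`. -/
theorem burgersF_solves_burgers :
    (∀ τ : ℝ, 0 < τ → ∀ z : ℂ, 0 < z.im → DifferentiableAt ℂ (burgersF τ) z) ∧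
    (∀ z : ℂ, 0 < z.im → ∀ τ : ℝ, 0 < τ →
      HasDerivAt (fun σ : ℝ => burgersF σ z) (burgersF τ z * deriv (burgersF τ) z) τ) ∧
    (∀ z : ℂ, 0 < z.im →
      Tendsto (fun τ : ℝ => burgersF τ z) (nhdsWithin 0 (Set.Ioi 0)) (nhds (-z⁻¹))) :=
  have ⟨hspace, htime, hlim⟩ := burgersF_solves_burgers_general
  ⟨fun τ hτ z hz => hspace τ hτ z (sub_two_mul_ofReal_mem_slitPlane hz.ne' _),
    fun z hz τ hτ => htime z τ hτ (sub_two_mul_ofReal_mem_slitPlane hz.ne' _),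
    fun z hz => hlim z (mem_slitPlane_iff.2 (.inr hz.ne'))⟩
end

section
/- Let σ > 0 and let μ be the semicircle distribution with variance σ². Then for every z in the upper half-plane ℂ₊, the Cauchy transform of μ satisfies ∫_ℝ (x − z)^{-1} μ(dx) = (1/(2σ²)) · ((z−2σ)^{1/2}(z+2σ)^{1/2} − z), where w^{1/2} denotes the principal complex square root. -/
open MeasureTheory Complex

/-!
Substituting `x = 2σ cos θ` turns an integral against the semicircle law into an average over the
unit circle with weight `2 (Im ζ)²`. Write `z = σ (u + u⁻¹)` with `‖u‖ < 1`, which is possible for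
every `z` off the cut `[-2σ, 2σ]`. On the unit circle the denominator `2σ Re ζ - z` is then a
multiple of `(1 - u ζ) (1 - u ζ⁻¹)`, and partial fractions give
`2 (Im ζ)² / (2 Re ζ - (u + u⁻¹)) = u / 2 * (g ζ + g ζ⁻¹)` with `g ζ = (ζ² - 1) / (1 - u ζ)`
holomorphic on the closed disc. By the mean value property `g ζ` and `g ζ⁻¹` both have average
`g 0 = -1`, so the Cauchy transform is `-u / σ`.
-/

section SemicircleIntegral

open scoped Real

variable {E : Type*} [NormedAddCommGroup E] [NormedSpace ℝ E]

lemma integral_semicircle {v : ℝ} (hv : 0 ≤ v) (f : ℝ → E) :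
    ∫ x, f x ∂(semicircle v)
      = (2 * π * v)⁻¹ • ∫ x in Set.Icc (-(2 * √v)) (2 * √v), √(4 * v - x ^ 2) • f x := by
  have hsupport : ∀ x ∉ Set.Icc (-(2 * √v)) (2 * √v), √(4 * v - x ^ 2) • f x = 0 := by
    intro x hx
    have hlt : 2 * √v < |x| := by
      by_contra! h
      exact hx (abs_le.1 h)
    have hsq : 4 * v - x ^ 2 ≤ 0 := by
      nlinarith [Real.sq_sqrt hv, sq_abs x, Real.sqrt_nonneg v]
    rw [Real.sqrt_eq_zero_of_nonpos hsq, zero_smul]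
  rw [semicircle, integral_withDensity_eq_integral_toReal_smul (by fun_prop) (by simp),
    setIntegral_eq_integral_of_forall_compl_eq_zero hsupport, ← integral_smul]
  refine integral_congr_ae (.of_forall fun x => ?_)
  simp only [smul_smul]
  rw [ENNReal.toReal_ofReal (by positivity)]

lemma integral_semicircle_eq_integral_sin_sq {σ : ℝ} (hσ : 0 < σ) (f : ℝ → E) :
    ∫ x, f x ∂(semicircle (σ ^ 2))
      = (2 / π) • ∫ θ in (0 : ℝ)..π, Real.sin θ ^ 2 • f (2 * σ * Real.cos θ) := by
  have himage : (fun θ => 2 * σ * Real.cos θ) '' Set.Icc 0 π = Set.Icc (-(2 * σ)) (2 * σ) := by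
    rw [← Set.image_image (2 * σ * ·) Real.cos, Real.bijOn_cos.image_eq,
      Set.image_mul_left_Icc (by positivity) (by norm_num)]
    simp
  have hinj : Set.InjOn (fun θ => 2 * σ * Real.cos θ) (Set.Icc 0 π) :=
    (mul_right_injective₀ (by positivity)).comp_injOn Real.injOn_cos
  have hderiv : ∀ θ ∈ Set.Icc 0 π, HasDerivWithinAt (fun θ => 2 * σ * Real.cos θ)
      (2 * σ * -Real.sin θ) (Set.Icc 0 π) θ := fun θ _ =>
    ((Real.hasDerivAt_cos θ).const_mul (2 * σ)).hasDerivWithinAt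
  rw [integral_semicircle (sq_nonneg σ), Real.sqrt_sq hσ.le, ← himage,
    integral_image_eq_integral_abs_deriv_smul measurableSet_Icc hderiv hinj,
    intervalIntegral.integral_of_le Real.pi_pos.le, ← integral_Icc_eq_integral_Ioc,
    ← integral_smul, ← integral_smul]
  refine setIntegral_congr_fun measurableSet_Icc fun θ hθ => ?_
  have hsin : 0 ≤ 2 * σ * Real.sin θ := mul_nonneg (by positivity) (Real.sin_nonneg_of_mem_Icc hθ)
  have hsqrt : √(4 * σ ^ 2 - (2 * σ * Real.cos θ) ^ 2) = 2 * σ * Real.sin θ := by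
    rw [← Real.sqrt_sq hsin]
    congr 1
    linear_combination (-4 * σ ^ 2) * Real.sin_sq_add_cos_sq θ
  simp only [hsqrt, smul_smul, mul_neg, abs_neg, abs_of_nonneg hsin]
  congr 1
  field_simp

lemma intervalIntegral_neg_self_eq_two_smul_of_even {f : ℝ → E} (hf : f.Even) (a : ℝ) :
    ∫ x in -a..a, f x = (2 : ℝ) • ∫ x in (0 : ℝ)..a, f x := by
  have hneg : ∫ x in -a..0, f x = ∫ x in (0 : ℝ)..a, f x := by
    simpa only [hf _, neg_zero, neg_neg] using
      intervalIntegral.integral_comp_neg (a := -a) (b := 0) f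
  by_cases hint : IntervalIntegrable f volume 0 a
  · have hint_neg : IntervalIntegrable f volume (-a) 0 := by
      simpa only [hf _, neg_zero] using ((IntervalIntegrable.iff_comp_neg).1 hint).symm
    rw [← intervalIntegral.integral_add_adjacent_intervals hint_neg hint, hneg, two_smul]
  · have hsub : Set.uIcc 0 a ⊆ Set.uIcc (-a) a :=
      Set.uIcc_subset_uIcc_right (by rcases le_total 0 a <;> simp [*])
    rw [intervalIntegral.integral_undef hint, smul_zero,
      intervalIntegral.integral_undef fun h => hint (h.mono_set hsub)]

lemma integral_semicircle_eq_circleAverage {σ : ℝ} (hσ : 0 < σ) (f : ℝ → E) :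
    ∫ x, f x ∂(semicircle (σ ^ 2))
      = Real.circleAverage (fun ζ => (2 * ζ.im ^ 2) • f (2 * σ * ζ.re)) 0 1 := by
  have heven : Function.Even fun θ => Real.sin θ ^ 2 • f (2 * σ * Real.cos θ) := fun θ => by
    simp
  have hcircle : ∀ θ, (2 * (circleMap 0 1 θ).im ^ 2) • f (2 * σ * (circleMap 0 1 θ).re)
      = (2 : ℝ) • Real.sin θ ^ 2 • f (2 * σ * Real.cos θ) := fun θ => by
    simp [circleMap_zero, exp_ofReal_mul_I_re, exp_ofReal_mul_I_im, mul_smul]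
  rw [Real.circleAverage_eq_integral_add (-π), intervalIntegral.integral_comp_add_right
    fun θ => (2 * (circleMap 0 1 θ).im ^ 2) • f (2 * σ * (circleMap 0 1 θ).re)]
  simp only [hcircle]
  rw [intervalIntegral.integral_smul, zero_add, show 2 * π + -π = π by ring,
    intervalIntegral_neg_self_eq_two_smul_of_even heven,
    integral_semicircle_eq_integral_sin_sq hσ, smul_smul, smul_smul]
  congr 1
  field_simp

end SemicircleIntegral

lemma cpow_half_sq (w : ℂ) : (w ^ ((1 : ℂ) / 2)) ^ 2 = w := by
  rw [one_div]
  exact cpow_ofNat_inv_pow w 2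

lemma inner_cpow_half_nonneg {w₁ w₂ : ℂ} (h : w₁.im = w₂.im) :
    0 ≤ inner ℝ (w₁ ^ ((1 : ℂ) / 2)) (w₂ ^ ((1 : ℂ) / 2)) := by
  rw [Complex.inner, mul_re, conj_re, conj_im]
  simp only [one_div, cpow_inv_two_re]
  rcases le_or_gt 0 w₁.im with h₁ | h₁
  · rw [cpow_inv_two_im_eq_sqrt h₁, cpow_inv_two_im_eq_sqrt (h ▸ h₁), mul_neg, sub_neg_eq_add]
    positivity
  · rw [cpow_inv_two_im_eq_neg_sqrt h₁, cpow_inv_two_im_eq_neg_sqrt (h ▸ h₁), neg_neg, neg_mul,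
      sub_neg_eq_add]
    positivity

lemma norm_half_sq_add_sq_sub_mul_le {a b : ℂ} (h : 0 ≤ inner ℝ a b) :
    ‖(a ^ 2 + b ^ 2) / 2 - a * b‖ ≤ ‖(a ^ 2 + b ^ 2) / 2 + a * b‖ := by
  have hsub : (a ^ 2 + b ^ 2) / 2 - a * b = (a - b) ^ 2 / 2 := by ring
  have hadd : (a ^ 2 + b ^ 2) / 2 + a * b = (a + b) ^ 2 / 2 := by ring
  rw [hsub, hadd, norm_div, norm_div, norm_pow, norm_pow]
  gcongr ?_ / _
  linarith [norm_sub_sq_real a b, norm_add_sq_real a b]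

/-- The branch of the inverse of the Joukowski map `u ↦ c (u + u⁻¹) / 2` that, for `c > 0`, sends
the complement of the segment `[-c, c]` into the unit disc; it yields the parameter `u` of the
Cauchy transform. The product of two principal roots is used because the single root
`(z ^ 2 - c ^ 2) ^ (1 / 2)` changes branch when `z` crosses the imaginary axis. -/
noncomputable def joukowskiInv (c : ℝ) (z : ℂ) : ℂ :=
  (z - (z - c) ^ ((1 : ℂ) / 2) * (z + c) ^ ((1 : ℂ) / 2)) / c

lemma joukowskiInv_mul_eq_one {c : ℝ} (hc : c ≠ 0) (z : ℂ) :
    joukowskiInv c z * ((z + (z - c) ^ ((1 : ℂ) / 2) * (z + c) ^ ((1 : ℂ) / 2)) / c) = 1 := by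
  rw [joukowskiInv, div_mul_div_comm, div_eq_one_iff_eq (by simpa using hc)]
  linear_combination (-(z + c)) * cpow_half_sq (z - c) -
    ((z - c) ^ ((1 : ℂ) / 2)) ^ 2 * cpow_half_sq (z + c)

lemma joukowskiInv_ne_zero {c : ℝ} (hc : c ≠ 0) (z : ℂ) : joukowskiInv c z ≠ 0 :=
  left_ne_zero_of_mul_eq_one (joukowskiInv_mul_eq_one hc z)

lemma joukowskiInv_add_inv {c : ℝ} (hc : c ≠ 0) (z : ℂ) :
    c * (joukowskiInv c z + (joukowskiInv c z)⁻¹) = 2 * z := by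
  have hc' : (c : ℂ) ≠ 0 := ofReal_ne_zero.2 hc
  rw [inv_eq_of_mul_eq_one_right (joukowskiInv_mul_eq_one hc z), joukowskiInv]
  field_simp
  ring

lemma norm_joukowskiInv_le_one {c : ℝ} (hc : c ≠ 0) (z : ℂ) : ‖joukowskiInv c z‖ ≤ 1 := by
  set v := (z + (z - c) ^ ((1 : ℂ) / 2) * (z + c) ^ ((1 : ℂ) / 2)) / c with hv
  have hle : ‖joukowskiInv c z‖ ≤ ‖v‖ := by
    have h := norm_half_sq_add_sq_sub_mul_le
      (inner_cpow_half_nonneg (w₁ := z - c) (w₂ := z + c) (by simp))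
    rw [cpow_half_sq, cpow_half_sq, show (z - c + (z + c)) / 2 = z by ring] at h
    rw [joukowskiInv, hv, norm_div, norm_div]
    gcongr
  have hprod : ‖joukowskiInv c z‖ * ‖v‖ = 1 := by
    rw [← norm_mul, joukowskiInv_mul_eq_one hc z, norm_one]
  nlinarith [norm_nonneg (joukowskiInv c z)]

lemma norm_joukowskiInv_lt_one {c : ℝ} (hc : 0 < c) {z : ℂ}
    (hz : z ∉ ofReal '' Set.Icc (-c) c) : ‖joukowskiInv c z‖ < 1 := by
  refine (norm_joukowskiInv_le_one hc.ne' z).lt_of_ne fun hnorm => hz ?_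
  have hre := abs_le.1 (hnorm ▸ abs_re_le_norm (joukowskiInv c z))
  refine ⟨c * (joukowskiInv c z).re, ⟨by nlinarith, by nlinarith⟩, ?_⟩
  have hadd := joukowskiInv_add_inv hc.ne' z
  rw [inv_eq_conj hnorm, add_conj] at hadd
  push_cast at hadd ⊢
  linear_combination hadd / 2

lemma one_sub_mul_ne_zero_of_norm_lt_one {u ζ : ℂ} (hu : ‖u‖ < 1) (hζ : ‖ζ‖ ≤ 1) :
    1 - u * ζ ≠ 0 := by
  intro h
  have hnorm := congrArg norm (sub_eq_zero.1 h)
  rw [norm_one, norm_mul] at hnorm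
  nlinarith [norm_nonneg u, norm_nonneg ζ]

lemma two_mul_im_sq_div_two_mul_re_sub_add_inv {u ζ : ℂ} (hu0 : u ≠ 0) (hu : ‖u‖ < 1)
    (hζ : ‖ζ‖ = 1) :
    2 * (ζ.im : ℂ) ^ 2 / (2 * ζ.re - (u + u⁻¹))
      = u / 2 * ((ζ ^ 2 - 1) / (1 - u * ζ) + (ζ⁻¹ ^ 2 - 1) / (1 - u * ζ⁻¹)) := by
  have hζ0 : ζ ≠ 0 := norm_ne_zero_iff.1 (hζ ▸ one_ne_zero)
  have h₁ := one_sub_mul_ne_zero_of_norm_lt_one hu hζ.le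
  have h₂ := one_sub_mul_ne_zero_of_norm_lt_one (ζ := ζ⁻¹) hu (by rw [norm_inv, hζ, inv_one])
  have hre : 2 * (ζ.re : ℂ) = ζ + ζ⁻¹ := by
    rw [inv_eq_conj hζ, add_conj]
    norm_cast
  have him : 2 * (ζ.im : ℂ) * I = ζ - ζ⁻¹ := by
    rw [inv_eq_conj hζ, sub_conj]
    norm_cast
  have him_sq : 2 * (ζ.im : ℂ) ^ 2 = -(ζ - ζ⁻¹) ^ 2 / 2 := by
    rw [← him]
    linear_combination (2 * (ζ.im : ℂ) ^ 2) * I_sq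
  have hden : 2 * (ζ.re : ℂ) - (u + u⁻¹) = -((1 - u * ζ) * (1 - u * ζ⁻¹)) / u := by
    rw [hre]
    field_simp
    ring
  rw [him_sq, hden, div_add_div _ _ h₁ h₂]
  generalize hD : (1 - u * ζ) * (1 - u * ζ⁻¹) = D
  have hD0 : D ≠ 0 := hD ▸ mul_ne_zero h₁ h₂
  field_simp
  ring

lemma circleAverage_two_mul_im_sq_div_two_mul_re_sub_add_inv {u : ℂ} (hu0 : u ≠ 0)
    (hu : ‖u‖ < 1) :
    Real.circleAverage (fun ζ => 2 * (ζ.im : ℂ) ^ 2 / (2 * ζ.re - (u + u⁻¹))) 0 1 = -u := by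
  set g : ℂ → ℂ := fun ζ => (ζ ^ 2 - 1) / (1 - u * ζ)
  have hg : DifferentiableOn ℂ g (Metric.closedBall 0 1) := by
    refine DifferentiableOn.div (by fun_prop) (by fun_prop) fun ζ hζ => ?_
    exact one_sub_mul_ne_zero_of_norm_lt_one hu (mem_closedBall_zero_iff.1 hζ)
  have hmean : Real.circleAverage g 0 1 = -1 := by
    have hdiff : DiffContOnCl ℂ g (Metric.ball 0 |1|) := by
      simpa using hg.diffContOnCl_ball subset_rfl
    simpa [g] using hdiff.circleAverage
  have hg_int : CircleIntegrable g 0 1 :=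
    (hg.continuousOn.mono Metric.sphere_subset_closedBall).circleIntegrable zero_le_one
  have hginv_int : CircleIntegrable (fun ζ => g ζ⁻¹) 0 1 := by
    refine ContinuousOn.circleIntegrable zero_le_one (hg.continuousOn.comp ?_ fun ζ hζ => ?_)
    · exact continuousOn_id.inv₀ fun ζ hζ => ne_zero_of_mem_unit_sphere ⟨ζ, hζ⟩
    · simp_all
  calc Real.circleAverage (fun ζ => 2 * (ζ.im : ℂ) ^ 2 / (2 * ζ.re - (u + u⁻¹))) 0 1
      = Real.circleAverage (fun ζ => (u / 2) • (g ζ + g ζ⁻¹)) 0 1 :=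
        Real.circleAverage_congr_sphere fun ζ hζ =>
          two_mul_im_sq_div_two_mul_re_sub_add_inv hu0 hu (by simpa using hζ)
    _ = (u / 2) • (Real.circleAverage g 0 1 + Real.circleAverage g 0 1) := by
        rw [Real.circleAverage_fun_smul, Real.circleAverage_fun_add hg_int hginv_int,
          Real.circleAverage_zero_one_congr_inv]
    _ = -u := by
        rw [hmean, smul_eq_mul]
        ring

lemma integral_inv_sub_semicircle {σ : ℝ} (hσ : 0 < σ) {u : ℂ} (hu0 : u ≠ 0) (hu : ‖u‖ < 1) :
    ∫ x : ℝ, ((x : ℂ) - σ * (u + u⁻¹))⁻¹ ∂(semicircle (σ ^ 2)) = -u / σ := by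
  rw [integral_semicircle_eq_circleAverage hσ, div_eq_inv_mul, ← smul_eq_mul (σ : ℂ)⁻¹,
    ← circleAverage_two_mul_im_sq_div_two_mul_re_sub_add_inv hu0 hu, ← Real.circleAverage_fun_smul]
  congr 1 with ζ
  have hfactor : ((2 * σ * ζ.re : ℝ) : ℂ) - σ * (u + u⁻¹) = σ * (2 * ζ.re - (u + u⁻¹)) := by
    push_cast
    ring
  rw [real_smul, smul_eq_mul, hfactor, mul_inv]
  push_cast
  ring

theorem cauchyTransform_semicircle_general {σ : ℝ} (hσ : 0 < σ) {z : ℂ}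
    (hz : z ∉ ofReal '' Set.Icc (-(2 * σ)) (2 * σ)) :
    ∫ x : ℝ, ((x : ℂ) - z)⁻¹ ∂(semicircle (σ ^ 2))
      = (1 / (2 * (σ : ℂ) ^ 2)) *
          ((z - 2 * (σ : ℂ)) ^ ((1 : ℂ) / 2) * (z + 2 * (σ : ℂ)) ^ ((1 : ℂ) / 2) - z) := by
  have hc : 0 < 2 * σ := by positivity
  have hz_eq : z = σ * (joukowskiInv (2 * σ) z + (joukowskiInv (2 * σ) z)⁻¹) := by
    have h := joukowskiInv_add_inv hc.ne' z
    push_cast at h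
    linear_combination -h / 2
  calc ∫ x : ℝ, ((x : ℂ) - z)⁻¹ ∂(semicircle (σ ^ 2))
      = -joukowskiInv (2 * σ) z / σ := by
        conv_lhs => rw [hz_eq]
        exact integral_inv_sub_semicircle hσ (joukowskiInv_ne_zero hc.ne' z)
          (norm_joukowskiInv_lt_one hc hz)
    _ = _ := by
        rw [joukowskiInv]
        push_cast
        field_simp
        ring

/-- **Cauchy transform of the semicircle law.** For `σ > 0` and `z` in the upper half-plane,
`∫ (x − z)⁻¹ dμ(x) = (1/(2σ²))((z−2σ)^{1/2}(z+2σ)^{1/2} − z)`, where `μ` is the semicircle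
distribution with variance `σ²` and the square roots are principal. -/
theorem cauchyTransform_semicircle (σ : ℝ) (hσ : 0 < σ) (z : ℂ) (hz : 0 < z.im) :
    ∫ x : ℝ, ((x : ℂ) - z)⁻¹ ∂(semicircle (σ ^ 2))
      = (1 / (2 * (σ : ℂ) ^ 2)) *
          ((z - 2 * (σ : ℂ)) ^ ((1 : ℂ) / 2) * (z + 2 * (σ : ℂ)) ^ ((1 : ℂ) / 2) - z) :=
  cauchyTransform_semicircle_general hσ (by rintro ⟨x, -, rfl⟩; exact hz.ne' (ofReal_im x))
end

section
/- Let n ≥ 1, κ > 0, γ > 0, L ≥ 0 and v ≥ 0. Let Y and Z be random real symmetric n×n matrices on a probability space (Ω, F, P) such that for every pair (i,k), the entry difference Z_{ik} − Y_{ik} is a centered Gaussian random variable with variance at most (2κ/n)·v. Let λ_1(·) ≥ … ≥ λ_n(·) denote the ordered eigenvalues, and let f : ℝ → ℝ be L-Lipschitz. Then, with p = (γ+1)/γ, E[ | (1/n)∑_{i=1}^n f(λ_i(Z)) − (1/n)∑_{i=1}^n f(λ_i(Y)) |^{2p} ] ≤ C · L^{2p} · v^{p}, where C > 0 is a constant depending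 only on κ and γ. In particular, if v = |t₂ − t₁|^γ (the setting of hypothesis (H2)), the 2(γ+1)/γ-th moment is bounded by C L^{2(γ+1)/γ} |t₂ − t₁|^{γ+1}, which verifies Billingsley's tightness criterion with exponent q = γ+1 > 1. -/
open MeasureTheory ProbabilityTheory Matrix

/-- The average `(1/n) ∑ f(λ_i(M))` of `f` over the eigenvalues of a symmetric matrix `M`
(defined as `0` if `M` is not symmetric). -/
noncomputable def specAvg {n : ℕ} (f : ℝ → ℝ) (M : Matrix (Fin n) (Fin n) ℝ) : ℝ :=
  if h : M.IsHermitian then (1 / (n : ℝ)) * ∑ i, f (h.eigenvalues i) else 0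

/-!
The squared overlaps `|⟨uᵢ, vⱼ⟩|²` of the eigenbases of two Hermitian matrices `A` and `B` form a
doubly stochastic matrix, i.e. a transport plan between the two spectra, and its quadratic cost is
exactly `‖A - B‖²` in the Frobenius norm. By Cauchy-Schwarz, the empirical averages of an
`L`-Lipschitz function over the two spectra differ by at most `L ‖A - B‖ / √n`. Minkowski's
inequality in `L^p`, applied to the squared entries, bounds the `L^(2p)` norm of `‖Z - Y‖` by `n`
times the largest `L^(2p)` norm of an entry, which is at most `√(2κv/n) ‖N‖_{2p}` with
`N` standard Gaussian, so all powers of `n` cancel.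
-/

open scoped NNReal ENNReal

section Transport

variable {n R : Type*} [Fintype n] [DecidableEq n]

lemma sum_sub_sum_of_mem_doublyStochastic [Ring R] [PartialOrder R] [IsOrderedRing R]
    {D : Matrix n n R} (hD : D ∈ doublyStochastic R n) (a b : n → R) :
    ∑ i, a i - ∑ j, b j = ∑ i, ∑ j, D i j * (a i - b j) := by
  simp only [mul_sub, Finset.sum_sub_distrib]
  rw [Finset.sum_comm (f := fun i j => D i j * b j)]
  simp only [← Finset.sum_mul, sum_row_of_mem_doublyStochastic hD,
    sum_col_of_mem_doublyStochastic hD, one_mul]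

lemma sq_sum_sub_sum_le_of_mem_doublyStochastic [CommRing R] [LinearOrder R]
    [IsStrictOrderedRing R] {D : Matrix n n R} (hD : D ∈ doublyStochastic R n) (a b : n → R) :
    (∑ i, a i - ∑ j, b j) ^ 2 ≤ Fintype.card n * ∑ i, ∑ j, D i j * (a i - b j) ^ 2 := by
  have hmass : ∑ i, ∑ j, D i j = Fintype.card n := by
    simp [sum_row_of_mem_doublyStochastic hD]
  have hcs := Finset.sum_sq_le_sum_mul_sum_of_sq_le_mul Finset.univ
    (r := fun x : n × n => D x.1 x.2 * (a x.1 - b x.2)) (f := fun x => D x.1 x.2)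
    (g := fun x => D x.1 x.2 * (a x.1 - b x.2) ^ 2)
    (fun x _ => nonneg_of_mem_doublyStochastic hD)
    (fun x _ => mul_nonneg (nonneg_of_mem_doublyStochastic hD) (sq_nonneg _))
    (fun x _ => le_of_eq (by ring))
  simp only [Fintype.sum_prod_type, hmass] at hcs
  rwa [sum_sub_sum_of_mem_doublyStochastic hD]

end Transport

section LpNorm

variable {Ω E : Type*} [NormedAddCommGroup E] {mΩ : MeasurableSpace Ω} {P : Measure Ω}

lemma lintegral_ofReal_norm_rpow (X : Ω → E) {q : ℝ} (hq : 0 < q) :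
    ∫⁻ ω, ENNReal.ofReal (‖X ω‖ ^ q) ∂P = eLpNorm X (ENNReal.ofReal q) P ^ q := by
  rw [eLpNorm_eq_lintegral_rpow_enorm_toReal (by simpa) ENNReal.ofReal_ne_top,
    ENNReal.toReal_ofReal hq.le, one_div, ENNReal.rpow_inv_rpow hq.ne']
  simp only [← ENNReal.ofReal_rpow_of_nonneg (norm_nonneg _) hq.le, ofReal_norm]

lemma sq_eLpNorm (X : Ω → E) (q : ℝ≥0∞) (P : Measure Ω) :
    eLpNorm X q P ^ 2 = eLpNorm (fun ω => ‖X ω‖ ^ 2) (q / 2) P := by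
  have h := eLpNorm_norm_rpow (p := q / 2) (μ := P) X two_pos
  simp only [Real.rpow_two, ENNReal.rpow_two, ENNReal.ofReal_ofNat] at h
  rw [h, ENNReal.div_mul_cancel two_ne_zero ENNReal.ofNat_ne_top]

end LpNorm

section Frobenius

open scoped Matrix.Norms.Frobenius

variable {m n 𝕜 : Type*} [Fintype m] [Fintype n] [RCLike 𝕜]

lemma frobenius_norm_sq {α : Type*} [SeminormedAddCommGroup α] (A : Matrix m n α) :
    ‖A‖ ^ 2 = ∑ i, ∑ j, ‖A i j‖ ^ 2 := by
  rw [frobenius_norm_def, ← Real.sqrt_eq_rpow, Real.sq_sqrt (by positivity)]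
  simp only [Real.rpow_two]

section Entries

variable {Ω E : Type*} [NormedAddCommGroup E] {mΩ : MeasurableSpace Ω} {P : Measure Ω} {q : ℝ≥0∞}

lemma sq_eLpNorm_frobenius_le_sum {X : Ω → Matrix m n E} (hq : 2 ≤ q)
    (hX : ∀ i j, AEStronglyMeasurable (fun ω => X ω i j) P) :
    eLpNorm X q P ^ 2 ≤ ∑ i, ∑ j, eLpNorm (fun ω => X ω i j) q P ^ 2 := by
  have hq' : 1 ≤ q / 2 := by
    rwa [ENNReal.le_div_iff_mul_le (by simp) (by simp), one_mul]
  simp only [sq_eLpNorm, frobenius_norm_sq, ← Fintype.sum_prod_type']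
  rw [← Finset.sum_fn]
  exact eLpNorm_sum_le (fun x _ => (hX x.1 x.2).norm.pow 2) hq'

lemma eLpNorm_frobenius_le_card_mul {X : Ω → Matrix n n E} (hq : 2 ≤ q)
    (hX : ∀ i j, AEStronglyMeasurable (fun ω => X ω i j) P) {r : ℝ≥0∞}
    (hr : ∀ i j, eLpNorm (fun ω => X ω i j) q P ≤ r) :
    eLpNorm X q P ≤ Fintype.card n * r := by
  refine (ENNReal.pow_le_pow_left_iff two_ne_zero).1 ?_
  calc eLpNorm X q P ^ 2 ≤ ∑ i, ∑ j, eLpNorm (fun ω => X ω i j) q P ^ 2 :=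
        sq_eLpNorm_frobenius_le_sum hq hX
    _ ≤ ∑ _i : n, ∑ _j : n, r ^ 2 := by
        gcongr with i _ j _
        exact hr i j
    _ = (Fintype.card n * r) ^ 2 := by
        simp only [Finset.sum_const, Finset.card_univ, nsmul_eq_mul]
        ring

end Entries

lemma frobenius_norm_sq_eq_re_trace (A : Matrix m n 𝕜) :
    ‖A‖ ^ 2 = RCLike.re (Aᴴ * A).trace := by
  simp only [trace, diag_apply, Matrix.mul_apply, conjTranspose_apply, RCLike.star_def,
    RCLike.conj_mul, ← RCLike.ofReal_pow, ← RCLike.ofReal_sum, RCLike.ofReal_re]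
  rw [frobenius_norm_sq, Finset.sum_comm]

lemma frobenius_norm_unitary_mul [DecidableEq m] {U : Matrix m m 𝕜} (hU : U ∈ unitaryGroup m 𝕜)
    (A : Matrix m n 𝕜) : ‖U * A‖ = ‖A‖ := by
  have hUU : Uᴴ * U = 1 := mem_unitaryGroup_iff'.1 hU
  have hgram : (U * A)ᴴ * (U * A) = Aᴴ * A := by
    rw [conjTranspose_mul, Matrix.mul_assoc, ← Matrix.mul_assoc Uᴴ, hUU, Matrix.one_mul]
  rw [← sq_eq_sq₀ (norm_nonneg _) (norm_nonneg _), frobenius_norm_sq_eq_re_trace, hgram,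
    ← frobenius_norm_sq_eq_re_trace]

variable [DecidableEq n]

lemma frobenius_norm_mul_unitary {U : Matrix n n 𝕜} (hU : U ∈ unitaryGroup n 𝕜)
    (A : Matrix m n 𝕜) : ‖A * U‖ = ‖A‖ := by
  rw [← frobenius_norm_conjTranspose, conjTranspose_mul, ← star_eq_conjTranspose U,
    frobenius_norm_unitary_mul (Unitary.star_mem hU), frobenius_norm_conjTranspose]

lemma map_norm_sq_mem_doublyStochastic {U : Matrix n n 𝕜} (hU : U ∈ unitaryGroup n 𝕜) :
    U.map (‖·‖ ^ 2) ∈ doublyStochastic ℝ n := by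
  have hrow {V : Matrix n n 𝕜} (hV : V ∈ unitaryGroup n 𝕜) (i : n) : ∑ j, ‖V i j‖ ^ 2 = 1 := by
    have h := congrFun (congrFun (mem_unitaryGroup_iff.1 hV) i) i
    rw [Matrix.mul_apply, one_apply_eq] at h
    simp only [star_apply, RCLike.star_def, RCLike.mul_conj] at h
    exact_mod_cast h
  refine mem_doublyStochastic_iff_sum.2 ⟨fun i j => sq_nonneg _, hrow hU, fun j => ?_⟩
  simpa using hrow (Unitary.star_mem hU) j

section Eigenvalues

variable {A B : Matrix n n 𝕜}

/-- The squared overlaps `|⟨uᵢ, vⱼ⟩|²` of the eigenbases `u` of `A` and `v` of `B`, a doubly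
stochastic matrix that serves as a transport plan between the two spectra. -/
noncomputable def eigenvalueCoupling (hA : A.IsHermitian) (hB : B.IsHermitian) : Matrix n n ℝ :=
  (star (hA.eigenvectorUnitary : Matrix n n 𝕜) * hB.eigenvectorUnitary).map (‖·‖ ^ 2)

lemma eigenvalueCoupling_mem_doublyStochastic (hA : A.IsHermitian) (hB : B.IsHermitian) :
    eigenvalueCoupling hA hB ∈ doublyStochastic ℝ n :=
  map_norm_sq_mem_doublyStochastic
    (mul_mem (Unitary.star_mem hA.eigenvectorUnitary.2) hB.eigenvectorUnitary.2)

lemma star_eigenvectorUnitary_mul (hA : A.IsHermitian) :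
    star (hA.eigenvectorUnitary : Matrix n n 𝕜) * A
      = diagonal (RCLike.ofReal ∘ hA.eigenvalues)
        * star (hA.eigenvectorUnitary : Matrix n n 𝕜) := by
  rw [← hA.conjStarAlgAut_star_eigenvectorUnitary, Unitary.conjStarAlgAut_star_apply,
    Matrix.mul_assoc, Unitary.mul_star_self_of_mem hA.eigenvectorUnitary.2, Matrix.mul_one]

lemma mul_eigenvectorUnitary (hA : A.IsHermitian) :
    A * (hA.eigenvectorUnitary : Matrix n n 𝕜)
      = (hA.eigenvectorUnitary : Matrix n n 𝕜) * diagonal (RCLike.ofReal ∘ hA.eigenvalues) := by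
  rw [← hA.conjStarAlgAut_star_eigenvectorUnitary, Unitary.conjStarAlgAut_star_apply,
    ← Matrix.mul_assoc, ← Matrix.mul_assoc, Unitary.mul_star_self_of_mem hA.eigenvectorUnitary.2,
    Matrix.one_mul]

lemma star_eigenvectorUnitary_mul_sub_mul_apply (hA : A.IsHermitian) (hB : B.IsHermitian)
    (i j : n) :
    (star (hA.eigenvectorUnitary : Matrix n n 𝕜) * (A - B) * hB.eigenvectorUnitary) i j
      = (star (hA.eigenvectorUnitary : Matrix n n 𝕜) * hB.eigenvectorUnitary) i j
        * ((hA.eigenvalues i - hB.eigenvalues j : ℝ) : 𝕜) := by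
  rw [Matrix.mul_sub, Matrix.sub_mul, star_eigenvectorUnitary_mul hA, Matrix.mul_assoc _ B,
    mul_eigenvectorUnitary hB, Matrix.mul_assoc (diagonal _), ← Matrix.mul_assoc _ _ (diagonal _),
    Matrix.sub_apply, diagonal_mul, mul_diagonal]
  simp only [Function.comp_apply, RCLike.ofReal_sub]
  ring

lemma sum_eigenvalueCoupling_mul_sq_sub (hA : A.IsHermitian) (hB : B.IsHermitian) :
    ∑ i, ∑ j, eigenvalueCoupling hA hB i j * (hA.eigenvalues i - hB.eigenvalues j) ^ 2
      = ‖A - B‖ ^ 2 := by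
  rw [← frobenius_norm_unitary_mul (Unitary.star_mem hA.eigenvectorUnitary.2),
    ← frobenius_norm_mul_unitary hB.eigenvectorUnitary.2, frobenius_norm_sq]
  simp only [eigenvalueCoupling, map_apply, star_eigenvectorUnitary_mul_sub_mul_apply, norm_mul,
    mul_pow, RCLike.norm_ofReal, sq_abs]

lemma sq_sum_comp_eigenvalues_sub_le (hA : A.IsHermitian) (hB : B.IsHermitian) {K : ℝ≥0}
    {f : ℝ → ℝ} (hf : LipschitzWith K f) :
    (∑ i, f (hA.eigenvalues i) - ∑ i, f (hB.eigenvalues i)) ^ 2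
      ≤ Fintype.card n * (K * ‖A - B‖) ^ 2 := by
  have hD := eigenvalueCoupling_mem_doublyStochastic hA hB
  have hf_sq (x y : ℝ) : (f x - f y) ^ 2 ≤ K ^ 2 * (x - y) ^ 2 := by
    rw [← mul_pow, ← sq_abs, ← sq_abs (_ * _), abs_mul, NNReal.abs_eq]
    gcongr
    exact hf.dist_le_mul x y
  refine (sq_sum_sub_sum_le_of_mem_doublyStochastic hD _ _).trans ?_
  rw [mul_pow, ← sum_eigenvalueCoupling_mul_sq_sub hA hB, Finset.mul_sum]
  simp only [Finset.mul_sum, mul_left_comm (_ ^ 2)]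
  gcongr with i _ j _
  · exact nonneg_of_mem_doublyStochastic hD
  · exact hf_sq _ _

lemma abs_specAvg_sub_le {n : ℕ} {A B : Matrix (Fin n) (Fin n) ℝ} (hA : A.IsHermitian)
    (hB : B.IsHermitian) {K : ℝ≥0} {f : ℝ → ℝ} (hf : LipschitzWith K f) :
    |specAvg f A - specAvg f B| ≤ K / √n * ‖A - B‖ := by
  rw [specAvg, specAvg, dif_pos hA, dif_pos hB, ← mul_sub]
  refine abs_le_of_sq_le_sq ?_ (by positivity)
  calc (1 / (n : ℝ) * _) ^ 2 ≤ (1 / (n : ℝ)) ^ 2 * (n * (K * ‖A - B‖) ^ 2) := by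
        rw [mul_pow]
        gcongr
        simpa using sq_sum_comp_eigenvalues_sub_le hA hB hf
    _ = (K / √n * ‖A - B‖) ^ 2 := by
        rw [div_mul_eq_mul_div, div_pow _ √(n : ℝ), Real.sq_sqrt n.cast_nonneg]
        field_simp

end Eigenvalues

lemma eLpNorm_specAvg_sub_le {Ω : Type*} {mΩ : MeasurableSpace Ω} {P : Measure Ω} {n : ℕ}
    {Y Z : Ω → Matrix (Fin n) (Fin n) ℝ}
    (hY : ∀ ω, (Y ω).IsHermitian) (hZ : ∀ ω, (Z ω).IsHermitian) {K : ℝ≥0} {f : ℝ → ℝ}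
    (hf : LipschitzWith K f) {q : ℝ≥0∞} (hq : 2 ≤ q)
    (hYZ : ∀ i j, AEStronglyMeasurable (fun ω => Z ω i j - Y ω i j) P) {r : ℝ≥0∞}
    (hr : ∀ i j, eLpNorm (fun ω => Z ω i j - Y ω i j) q P ≤ r) :
    eLpNorm (fun ω => specAvg f (Z ω) - specAvg f (Y ω)) q P ≤ ENNReal.ofReal (K * √n) * r := by
  calc _ ≤ ENNReal.ofReal (K / √n) * eLpNorm (fun ω => Z ω - Y ω) q P :=
        eLpNorm_le_mul_eLpNorm_of_ae_le_mul
          (ae_of_all _ fun ω => abs_specAvg_sub_le (hZ ω) (hY ω) hf) q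
    _ ≤ ENNReal.ofReal (K / √n) * (ENNReal.ofReal n * r) := by
        gcongr
        simpa using eLpNorm_frobenius_le_card_mul (X := fun ω => Z ω - Y ω) hq hYZ hr
    _ = ENNReal.ofReal (K * √n) * r := by
        rw [← mul_assoc, ← ENNReal.ofReal_mul (by positivity), div_mul_eq_mul_div, mul_div_assoc,
          Real.div_sqrt]

end Frobenius

section Gaussian

variable {Ω : Type*} {mΩ : MeasurableSpace Ω} {P : Measure Ω}

lemma hasLaw_of_map_eq {𝓧 : Type*} {_ : MeasurableSpace 𝓧} {X : Ω → 𝓧} {μ : Measure 𝓧} [NeZero μ]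
    (hX : P.map X = μ) : HasLaw X μ P where
  aemeasurable := AEMeasurable.of_map_ne_zero (hX ▸ NeZero.ne μ)
  map_eq := hX

lemma eLpNorm_id_gaussianReal_zero (s : ℝ≥0) (q : ℝ≥0∞) :
    eLpNorm id q (gaussianReal 0 s)
      = ENNReal.ofReal √s * eLpNorm id q (gaussianReal 0 1) := by
  have hscale : gaussianReal 0 s = (gaussianReal 0 1).map (√(s : ℝ) * ·) := by
    rw [gaussianReal_map_const_mul, mul_zero, mul_one]
    congr 1
    ext
    simp
  rw [hscale, eLpNorm_map_measure (by fun_prop) (by fun_prop)]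
  exact (eLpNorm_const_smul √(s : ℝ) id q _).trans
    (by rw [Real.enorm_of_nonneg (Real.sqrt_nonneg _)])

lemma eLpNorm_le_of_hasLaw_gaussianReal {X : Ω → ℝ} {s : ℝ≥0} (hX : HasLaw X (gaussianReal 0 s) P)
    {a : ℝ} (hs : s ≤ a) (q : ℝ≥0∞) :
    eLpNorm X q P ≤ ENNReal.ofReal √a * eLpNorm id q (gaussianReal 0 1) := by
  calc eLpNorm X q P = eLpNorm id q (gaussianReal 0 s) := by
        rw [← hX.map_eq, eLpNorm_map_measure (by fun_prop) hX.aemeasurable, Function.id_comp]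
    _ = ENNReal.ofReal √s * eLpNorm id q (gaussianReal 0 1) := eLpNorm_id_gaussianReal_zero s q
    _ ≤ _ := by gcongr

/-- The absolute moment `E|N|^q` of a standard Gaussian `N`, which enters the constant of the
moment bound. -/
noncomputable def gaussianAbsMoment (q : ℝ) : ℝ := ∫ x, |x| ^ q ∂gaussianReal 0 1

lemma integrable_abs_rpow_gaussianReal {q : ℝ} (hq : 0 < q) (μ : ℝ) (v : ℝ≥0) :
    Integrable (fun x => |x| ^ q) (gaussianReal μ v) := by
  simpa [hq.le] using (memLp_id_gaussianReal' (μ := μ) (v := v) (ENNReal.ofReal q)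
    ENNReal.ofReal_ne_top).integrable_norm_rpow'

lemma ofReal_gaussianAbsMoment {q : ℝ} (hq : 0 < q) :
    ENNReal.ofReal (gaussianAbsMoment q)
      = eLpNorm id (ENNReal.ofReal q) (gaussianReal 0 1) ^ q := by
  rw [← lintegral_ofReal_norm_rpow _ hq, gaussianAbsMoment, ofReal_integral_eq_lintegral_ofReal
    (integrable_abs_rpow_gaussianReal hq 0 1) (ae_of_all _ fun x => by positivity)]
  rfl

lemma gaussianAbsMoment_pos {q : ℝ} (hq : 0 < q) : 0 < gaussianAbsMoment q := by
  have : NullSingletonClass (gaussianReal 0 1) := nullSingletonClass_gaussianReal one_ne_zero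
  have hsupport : Function.support (fun x : ℝ => |x| ^ q) = {0}ᶜ := by
    ext x
    simp [Real.rpow_eq_zero (abs_nonneg x) hq.ne']
  rw [gaussianAbsMoment, integral_pos_iff_support_of_nonneg (fun x => by positivity)
    (integrable_abs_rpow_gaussianReal hq 0 1), hsupport]
  simp [measure_compl (measurableSet_singleton _)]

lemma eLpNorm_specAvg_sub_le_of_hasLaw_gaussianReal {n : ℕ} {Y Z : Ω → Matrix (Fin n) (Fin n) ℝ}
    (hY : ∀ ω, (Y ω).IsHermitian) (hZ : ∀ ω, (Z ω).IsHermitian) {K : ℝ≥0} {f : ℝ → ℝ}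
    (hf : LipschitzWith K f) {q : ℝ≥0∞} (hq : 2 ≤ q) {c : ℝ}
    (hgauss : ∀ i k, ∃ s : ℝ≥0, s ≤ c / n ∧
      HasLaw (fun ω => Z ω i k - Y ω i k) (gaussianReal 0 s) P) :
    eLpNorm (fun ω => specAvg f (Z ω) - specAvg f (Y ω)) q P
      ≤ ENNReal.ofReal (K * √c) * eLpNorm id q (gaussianReal 0 1) := by
  choose s hs hlaw using hgauss
  have hcancel : √n * √(c / n) ≤ √c := by
    rw [Real.sqrt_div' _ n.cast_nonneg]
    rw [mul_div_left_comm]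
    exact mul_le_of_le_one_right (Real.sqrt_nonneg c) (div_self_le_one _)
  calc _ ≤ ENNReal.ofReal (K * √n)
          * (ENNReal.ofReal √(c / n) * eLpNorm id q (gaussianReal 0 1)) :=
        eLpNorm_specAvg_sub_le hY hZ hf hq
          (fun i j => (hlaw i j).aemeasurable.aestronglyMeasurable)
          fun i j => eLpNorm_le_of_hasLaw_gaussianReal (hlaw i j) (hs i j) q
    _ = ENNReal.ofReal (K * (√n * √(c / n))) * eLpNorm id q (gaussianReal 0 1) := by
        rw [← mul_assoc, ← ENNReal.ofReal_mul (by positivity), mul_assoc]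
    _ ≤ _ := by gcongr

theorem eigenvalue_statistic_increment_moment_bound_general {n : ℕ}
    {Y Z : Ω → Matrix (Fin n) (Fin n) ℝ}
    (hY : ∀ ω, (Y ω).IsHermitian) (hZ : ∀ ω, (Z ω).IsHermitian)
    {κ v p : ℝ} (hκ : 0 ≤ κ) (hv : 0 ≤ v) (hp : 1 ≤ p)
    (hgauss : ∀ i k, ∃ s : ℝ≥0, s ≤ 2 * κ / n * v ∧
      Measure.map (fun ω => Z ω i k - Y ω i k) P = gaussianReal 0 s)
    {L : ℝ} {f : ℝ → ℝ} (hL : 0 ≤ L) (hf : ∀ x y, |f x - f y| ≤ L * |x - y|) :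
    ∫⁻ ω, ENNReal.ofReal (|specAvg f (Z ω) - specAvg f (Y ω)| ^ (2 * p)) ∂P
      ≤ ENNReal.ofReal ((2 * κ) ^ p * gaussianAbsMoment (2 * p) * L ^ (2 * p) * v ^ p) := by
  lift L to ℝ≥0 using hL
  have hf' : LipschitzWith L f := LipschitzWith.of_dist_le_mul hf
  have hq : (2 : ℝ≥0∞) ≤ ENNReal.ofReal (2 * p) := by
    simpa using ENNReal.ofReal_le_ofReal (by linarith : 2 ≤ 2 * p)
  have hnorm := eLpNorm_specAvg_sub_le_of_hasLaw_gaussianReal hY hZ hf' hq (c := 2 * κ * v)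
    fun i k => (hgauss i k).imp fun s hs =>
      ⟨hs.1.trans_eq (div_mul_eq_mul_div _ _ _), hasLaw_of_map_eq hs.2⟩
  have hscale : (L * √(2 * κ * v)) ^ (2 * p) = (2 * κ) ^ p * L ^ (2 * p) * v ^ p := by
    rw [Real.mul_rpow (by positivity) (by positivity), Real.rpow_mul (Real.sqrt_nonneg _),
      Real.rpow_two, Real.sq_sqrt (by positivity), Real.mul_rpow (by positivity) hv]
    ring
  calc _ = eLpNorm (fun ω => specAvg f (Z ω) - specAvg f (Y ω)) (ENNReal.ofReal (2 * p)) P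
          ^ (2 * p) := lintegral_ofReal_norm_rpow _ (by linarith)
    _ ≤ (ENNReal.ofReal (L * √(2 * κ * v))
          * eLpNorm id (ENNReal.ofReal (2 * p)) (gaussianReal 0 1)) ^ (2 * p) := by gcongr
    _ = _ := by
        rw [ENNReal.mul_rpow_of_nonneg _ _ (by linarith),
          ← ofReal_gaussianAbsMoment (by linarith),
          ENNReal.ofReal_rpow_of_nonneg (by positivity) (by linarith), hscale,
          ← ENNReal.ofReal_mul (by positivity)]
        congr 1
        ring

end Gaussian

/-- **Moment bound for eigenvalue linear statistics of Gaussian perturbations.** There is a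
constant `C > 0` depending only on `κ, γ > 0` such that for any `n ≥ 1`, any random real
symmetric `n × n` matrices `Y`, `Z` whose entrywise differences `Z_{ik} − Y_{ik}` are centered
Gaussian with variance at most `(2κ/n)v`, and any `L`-Lipschitz `f : ℝ → ℝ`, with
`p = (γ+1)/γ` one has `E[|⟨μ^Z, f⟩ − ⟨μ^Y, f⟩|^{2p}] ≤ C L^{2p} v^p`. -/
theorem eigenvalue_statistic_increment_moment_bound
    (κ γ : ℝ) (hκ : 0 < κ) (hγ : 0 < γ) :
    ∃ C > (0 : ℝ), ∀ (n : ℕ), 1 ≤ n →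
      ∀ (Ω : Type) (mΩ : MeasurableSpace Ω) (P : Measure Ω), IsProbabilityMeasure P →
      ∀ (Y Z : Ω → Matrix (Fin n) (Fin n) ℝ),
        (∀ ω, (Y ω).IsHermitian) → (∀ ω, (Z ω).IsHermitian) →
        ∀ v : ℝ, 0 ≤ v →
        (∀ i k : Fin n, ∃ s : NNReal, (s : ℝ) ≤ 2 * κ / n * v ∧
            Measure.map (fun ω => Z ω i k - Y ω i k) P = gaussianReal 0 s) →
        ∀ (L : ℝ) (f : ℝ → ℝ), 0 ≤ L → (∀ x y : ℝ, |f x - f y| ≤ L * |x - y|) →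
        ∫⁻ ω, ENNReal.ofReal
            (|specAvg f (Z ω) - specAvg f (Y ω)| ^ (2 * ((γ + 1) / γ))) ∂P
          ≤ ENNReal.ofReal (C * L ^ (2 * ((γ + 1) / γ)) * v ^ ((γ + 1) / γ)) := by
  have hp : 1 ≤ (γ + 1) / γ := (one_le_div hγ).2 (by linarith)
  have hC : 0 < (2 * κ) ^ ((γ + 1) / γ) * gaussianAbsMoment (2 * ((γ + 1) / γ)) :=
    mul_pos (by positivity) (gaussianAbsMoment_pos (by linarith))
  refine ⟨_, hC, ?_⟩
  intro _ _ _ _ _ _ _ _ hY hZ _ hv hgauss _ _ hL hf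
  exact eigenvalue_statistic_increment_moment_bound_general hY hZ hκ.le hv hp hgauss hL hf
end

section
/- Let d ≥ 1, j ∈ {1,…,d}, and let M ⊂ ℝ^d be a Borel set of Lebesgue measure zero such that its projection γ_j(M) onto the hyperplane P_j = {x ∈ ℝ^d : x_j = 0} has (d−1)-dimensional Lebesgue measure zero. Let D = ℝ^d ∖ M, and let F : ℝ^d → ℝ be a measurable function that is continuously differentiable on D and satisfies the polynomial growth bound |F(x)| + |∂F/∂x_j(x)| ≤ C(1 + |x|^N) for all x ∈ D, for some constants C, N > 0. Then for every Schwartz function φ : ℝ^d → ℝ, ∫_{ℝ^d} 1_D(x) (∂F/∂x_j)(x) φ(x) dx = − ∫_{ℝ^d} 1_D(x) F(x) (∂φ/∂x_j)(x) dx. -/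
open MeasureTheory

/-!
Replace `M` by its saturation `S`, the union of all lines parallel to `v = e_j` that meet `M`. In
fact `S` is the cylinder over the projection of `M`, so it is null by Fubini. Since `S` is
invariant under translations along `v`, setting `F` to zero on `S` produces a function that has a
derivative along `v` at *every* point, and integration by parts along whole lines applies to it
with no boundary terms: they vanish because the products with a Schwartz function are integrable.
-/

section LineSaturation

variable (R : Type*) {E : Type*} [Ring R] [AddCommGroup E] [Module R E]

/-- The saturation of `M` in the direction `v`: the union of the lines parallel to `v` that
meet `M`. A null projection of `M` along `v` is encoded as a null saturation, which needs no
choice of a complementary hyperplane. -/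
def lineSaturation (v : E) (M : Set E) : Set E := {x | ∃ t : R, x + t • v ∈ M}

variable {R} {v : E} {M : Set E}

theorem subset_lineSaturation : M ⊆ lineSaturation R v M := fun x hx ↦ ⟨0, by simpa using hx⟩

theorem add_smul_mem_lineSaturation_iff {x : E} {t : R} :
    x + t • v ∈ lineSaturation R v M ↔ x ∈ lineSaturation R v M := by
  constructor
  · rintro ⟨s, hs⟩
    exact ⟨t + s, by rwa [add_smul, ← add_assoc]⟩
  · rintro ⟨s, hs⟩
    exact ⟨s - t, by rwa [add_assoc, ← add_smul, add_sub_cancel]⟩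

variable {𝕜 F : Type*} [NontriviallyNormedField 𝕜] [Module 𝕜 E] [NormedAddCommGroup F]
  [NormedSpace 𝕜 F]

theorem hasLineDerivAt_indicator_compl_lineSaturation {f f' : E → F}
    (hf : ∀ x ∈ Mᶜ, HasLineDerivAt 𝕜 f (f' x) x v) (x : E) :
    HasLineDerivAt 𝕜 ((lineSaturation 𝕜 v M)ᶜ.indicator f)
      ((lineSaturation 𝕜 v M)ᶜ.indicator f' x) x v := by
  by_cases hx : x ∈ lineSaturation 𝕜 v M
  · have hline (t : 𝕜) : (lineSaturation 𝕜 v M)ᶜ.indicator f (x + t • v) = 0 :=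
      Set.indicator_of_notMem (Set.notMem_compl_iff.2 (add_smul_mem_lineSaturation_iff.2 hx)) f
    rw [Set.indicator_of_notMem (Set.notMem_compl_iff.2 hx)]
    simpa only [HasLineDerivAt, hline] using hasDerivAt_const (0 : 𝕜) (0 : F)
  · have hline (t : 𝕜) : (lineSaturation 𝕜 v M)ᶜ.indicator f (x + t • v) = f (x + t • v) :=
      Set.indicator_of_mem (mt add_smul_mem_lineSaturation_iff.1 hx) f
    rw [Set.indicator_of_mem hx]
    simpa only [HasLineDerivAt, hline] using hf x (mt (subset_lineSaturation ·) hx)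

end LineSaturation

section CoordinateProjection

variable {ι : Type*}

theorem image_subtypeRestrict_ne [DecidableEq ι] {α : Type*} (j : ι) (M : Set (ι → α)) :
    Subtype.restrict (β := fun _ ↦ α) (· ≠ j) '' M =
      {y | ∃ t, (fun i ↦ if h : i = j then t else y ⟨i, h⟩) ∈ M} := by
  ext y
  constructor
  · rintro ⟨x, hx, rfl⟩
    refine ⟨x j, ?_⟩
    convert hx with i
    split_ifs with h
    exacts [congrArg x h.symm, rfl]
  · rintro ⟨t, ht⟩
    exact ⟨_, ht, funext fun i ↦ dif_neg i.2⟩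

variable [Fintype ι]

theorem quasiMeasurePreserving_subtypeRestrict (α : ι → Type*) [∀ i, MeasureSpace (α i)]
    [∀ i, SigmaFinite (volume : Measure (α i))] (p : ι → Prop) [DecidablePred p] :
    Measure.QuasiMeasurePreserving (Subtype.restrict (β := α) p) :=
  Measure.quasiMeasurePreserving_fst.comp
    (volume_preserving_piEquivPiSubtypeProd α p).quasiMeasurePreserving

theorem volume_lineSaturation_single_eq_zero [DecidableEq ι] {j : ι} {M : Set (ι → ℝ)}
    (hM : volume (Subtype.restrict (β := fun _ ↦ ℝ) (· ≠ j) '' M) = 0) :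
    volume (lineSaturation ℝ (Pi.single j 1) M) = 0 := by
  refine measure_mono_null ?_
    ((quasiMeasurePreserving_subtypeRestrict (fun _ : ι ↦ ℝ) (· ≠ j)).preimage_null hM)
  rintro x ⟨t, ht⟩
  refine ⟨_, ht, ?_⟩
  ext i
  simp [i.2]

end CoordinateProjection

section IntegrationByParts

open scoped SchwartzMap Topology

variable {E F G W : Type*} [NormedAddCommGroup E] [NormedSpace ℝ E] [MeasurableSpace E]
  [BorelSpace E] [NormedAddCommGroup F] [NormedSpace ℝ F] [NormedAddCommGroup G] [NormedSpace ℝ G]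
  [NormedAddCommGroup W] [NormedSpace ℝ W] {μ : Measure E}

theorem integrable_bilinear_schwartzMap_of_polynomial_growth [SecondCountableTopology E]
    [μ.HasTemperateGrowth] (B : F →L[ℝ] G →L[ℝ] W) {f : E → F} (hf : AEStronglyMeasurable f μ)
    {C : ℝ} {N : ℕ} (hgrowth : ∀ᵐ x ∂μ, ‖f x‖ ≤ C * (1 + ‖x‖ ^ N)) (φ : 𝓢(E, G)) :
    Integrable (fun x ↦ B (f x) (φ x)) μ := by
  have hmajorant : Integrable (fun x ↦ ‖B‖ * C * (‖φ x‖ + ‖x‖ ^ N * ‖φ x‖)) μ :=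
    (φ.integrable.norm.add (φ.integrable_pow_mul μ N)).const_mul _
  refine hmajorant.mono' (B.aestronglyMeasurable_comp₂ hf φ.integrable.aestronglyMeasurable) ?_
  filter_upwards [hgrowth] with x hx
  calc ‖B (f x) (φ x)‖ ≤ ‖B‖ * ‖f x‖ * ‖φ x‖ := B.le_opNorm₂ _ _
    _ ≤ ‖B‖ * (C * (1 + ‖x‖ ^ N)) * ‖φ x‖ := by gcongr
    _ = ‖B‖ * C * (‖φ x‖ + ‖x‖ ^ N * ‖φ x‖) := by ring

theorem aestronglyMeasurable_of_ae_hasLineDerivAt [μ.IsAddRightInvariant] {f f' : E → F} {v : E}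
    (hf : AEStronglyMeasurable f μ) (hf' : ∀ᵐ x ∂μ, HasLineDerivAt ℝ f (f' x) x v) :
    AEStronglyMeasurable f' μ := by
  have htranslate (t : ℝ) : AEStronglyMeasurable (fun x ↦ f (x + t • v)) μ :=
    hf.comp_measurePreserving (measurePreserving_add_right μ (t • v))
  refine aestronglyMeasurable_of_tendsto_ae (𝓝[≠] (0 : ℝ))
    (fun t ↦ ((htranslate t).sub hf).const_smul t⁻¹) ?_
  filter_upwards [hf'] with x hx
  exact hx.tendsto_slope_zero

variable [FiniteDimensional ℝ E] [μ.IsAddHaarMeasure] {v : E} {M : Set E}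

theorem integral_bilinear_hasLineDerivAt_right_eq_neg_left_of_null_lineSaturation
    (hM : μ (lineSaturation ℝ v M) = 0) {B : F →L[ℝ] G →L[ℝ] W} {f f' : E → F} {g g' : E → G}
    (hf'g : Integrable (fun x ↦ B (f' x) (g x)) μ) (hfg' : Integrable (fun x ↦ B (f x) (g' x)) μ)
    (hfg : Integrable (fun x ↦ B (f x) (g x)) μ)
    (hf : ∀ x ∈ Mᶜ, HasLineDerivAt ℝ f (f' x) x v)
    (hg : ∀ x ∈ Mᶜ, HasLineDerivAt ℝ g (g' x) x v) :
    ∫ x, B (f x) (g' x) ∂μ = -∫ x, B (f' x) (g x) ∂μ := by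
  have hindicator (u : E → F) (w : E → G) :
      (fun x ↦ B (u x) (w x)) =ᵐ[μ]
        fun x ↦ B ((lineSaturation ℝ v M)ᶜ.indicator u x)
          ((lineSaturation ℝ v M)ᶜ.indicator w x) := by
    filter_upwards [measure_eq_zero_iff_ae_notMem.1 hM] with x hx
    rw [Set.indicator_of_mem hx, Set.indicator_of_mem hx]
  rw [integral_congr_ae (hindicator f g'), integral_congr_ae (hindicator f' g)]
  exact integral_bilinear_hasLineDerivAt_right_eq_neg_left_of_integrable
    (hf'g.congr (hindicator f' g)) (hfg'.congr (hindicator f g')) (hfg.congr (hindicator f g))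
    (fun x _ ↦ hasLineDerivAt_indicator_compl_lineSaturation hf x)
    (fun x _ ↦ hasLineDerivAt_indicator_compl_lineSaturation hg x)

theorem integration_by_parts_off_null_set_general [CompleteSpace W]
    (hM : μ (lineSaturation ℝ v M) = 0) (B : F →L[ℝ] G →L[ℝ] W) {f f' : E → F}
    (hf : AEStronglyMeasurable f μ) (hf' : ∀ x ∈ Mᶜ, HasLineDerivAt ℝ f (f' x) x v)
    {C : ℝ} {N : ℕ} (hgrowth : ∀ x ∈ Mᶜ, ‖f x‖ + ‖f' x‖ ≤ C * (1 + ‖x‖ ^ N)) (φ : 𝓢(E, G)) :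
    ∫ x, B (Mᶜ.indicator f' x) (φ x) ∂μ
      = -∫ x, B (Mᶜ.indicator f x) (fderiv ℝ φ x v) ∂μ := by
  have hMae : ∀ᵐ x ∂μ, x ∈ Mᶜ :=
    measure_eq_zero_iff_ae_notMem.1 (measure_mono_null subset_lineSaturation hM)
  have hindicator (u : E → F) (w : E → G) :
      ∫ x, B (Mᶜ.indicator u x) (w x) ∂μ = ∫ x, B (u x) (w x) ∂μ :=
    integral_congr_ae <| hMae.mono fun x hx ↦ by simp only [Set.indicator_of_mem hx]
  have hintegrable {u : E → F} (hu : AEStronglyMeasurable u μ)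
      (hle : ∀ x, ‖u x‖ ≤ ‖f x‖ + ‖f' x‖) (ψ : 𝓢(E, G)) :
      Integrable (fun x ↦ B (u x) (ψ x)) μ :=
    integrable_bilinear_schwartzMap_of_polynomial_growth B hu
      (hMae.mono fun x hx ↦ (hle x).trans (hgrowth x hx)) ψ
  have hf_le (x : E) : ‖f x‖ ≤ ‖f x‖ + ‖f' x‖ := le_add_of_nonneg_right (norm_nonneg _)
  have hf'_le (x : E) : ‖f' x‖ ≤ ‖f x‖ + ‖f' x‖ := le_add_of_nonneg_left (norm_nonneg _)
  have hf'meas : AEStronglyMeasurable f' μ :=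
    aestronglyMeasurable_of_ae_hasLineDerivAt hf (hMae.mono hf')
  rw [hindicator, hindicator, ← neg_eq_iff_eq_neg, eq_comm]
  exact integral_bilinear_hasLineDerivAt_right_eq_neg_left_of_null_lineSaturation hM
    (hintegrable hf'meas hf'_le φ) (hintegrable hf hf_le (LineDeriv.lineDerivOp v φ))
    (hintegrable hf hf_le φ) hf' fun _ _ ↦ φ.differentiableAt.hasFDerivAt.hasLineDerivAt v

end IntegrationByParts

/-- **Integration by parts off a null set.** Let `M ⊆ ℝ^d` be a Borel null set whose projection
onto the hyperplane `{x_j = 0}` is null for `(d−1)`-dimensional Lebesgue measure, let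
`D = ℝ^d ∖ M`, and let `F` be measurable, continuously differentiable on `D`, with `F` and
`∂F/∂x_j` of polynomial growth on `D`. Then for every Schwartz function `φ`,
`∫ 1_D ∂F/∂x_j · φ = − ∫ 1_D F · ∂φ/∂x_j`. -/
theorem integration_by_parts_off_null_set
    (d : ℕ) (hd : 1 ≤ d) (j : Fin d)
    (M : Set (Fin d → ℝ)) (hMmeas : MeasurableSet M) (hM0 : volume M = 0)
    (hproj : volume {y : {i : Fin d // i ≠ j} → ℝ |
        ∃ t : ℝ, (fun i : Fin d => if h : i = j then t else y ⟨i, h⟩) ∈ M} = 0)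
    (F : (Fin d → ℝ) → ℝ) (hFmeas : Measurable F)
    (hFdiff : ∀ x ∈ Mᶜ, DifferentiableAt ℝ F x)
    (hFC1 : ContinuousOn (fderiv ℝ F) Mᶜ)
    (C : ℝ) (hC : 0 < C) (N : ℕ) (hN : 0 < N)
    (hgrowth : ∀ x ∈ Mᶜ, |F x| + |fderiv ℝ F x (Pi.single j 1)| ≤ C * (1 + ‖x‖ ^ N))
    (φ : SchwartzMap (Fin d → ℝ) ℝ) :
    ∫ x, Set.indicator Mᶜ (fun x => fderiv ℝ F x (Pi.single j 1)) x * φ x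
      = - ∫ x, Set.indicator Mᶜ F x * fderiv ℝ (fun y => φ y) x (Pi.single j 1) := by
  have hnull : volume (lineSaturation ℝ (Pi.single j (1 : ℝ)) M) = 0 :=
    volume_lineSaturation_single_eq_zero (by rwa [image_subtypeRestrict_ne])
  exact integration_by_parts_off_null_set_general hnull (ContinuousLinearMap.mul ℝ ℝ)
    hFmeas.aestronglyMeasurable (fun x hx ↦ (hFdiff x hx).hasFDerivAt.hasLineDerivAt _) hgrowth φ
end
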